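/- Let 0 < α < 1 and 1 < p < ∞ satisfy αp > 1. There exist δ > 0 and C > 0, depending only on α and p, with the following property: for every Lipschitz function A : ℝ → ℝ with compact support whose Lipschitz constant is at most δ, letting Ω = {z ∈ ℂ : Im z > A(Re z)} and F(w) = (1/π) ∫_ℝ A'(x)/((x + i·A(x) − w)²) dx, and for every function g : ℂ → ℂ that is complex-differentiable at every point w ∈ Ω with derivative g'(w) = F(w) (such as g = B(χ_Ω)), one has ∬_{ℝ×ℝ} |A'(x) − A'(y)|^p / |x − y|^{αp} dx dy ≤ C ∫_Ω (D^α g(z))^p dm(z), where D^α g(z) = ( ∫_Ω |g(z) − g(w)|² / |z − w|^{2 + 2α} dm(w) )^{1/2}. -/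

import Mathlib

/-!
Let `f(z) = (1/π) ∫ A'(t) / (t - z)² dt` (`flat`) be the linearisation at `A = 0` of the derivative
`F(x + i (A x + y))` of the Beurling transform (`dB`), viewed as a function of `z = x + i y` on the
upper half-plane, and let `‖f‖` denote the norm `(∬ (y ^ (1 - α) |f|) ^ p dx dy) ^ (1 / p)`, whose
`p`-th power is `wNorm p (wt α 0)`. The theorem is a chain of three estimates,

  Besov seminorm of `A'` `≲ ‖f‖ ≲ ‖F‖ ≲` fractional Sobolev seminorm of `g`.

*First estimate* (`exists_besov_le`). The Poisson extension of `A'` has nontangential limits `A'`,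
and its gradient is bounded by `|f|`. Hence `A' x - A' (x + h)` is at most the integral of `2 |f|`
over two slanted segments from `x` and `x + h` to their meeting point at height `h / 2`. In units of
`h` this is a superposition of translations and dilations of `|f|`, and Minkowski's inequality
(`wNorm_operator`) bounds it in the weighted norm; the constant converges because `α > 1 / p`.

*Second estimate* (`exists_absorb`). The closed form `dγ / (γ - w)²` has zero integral along the
graph, so the density `A'` in `F` can be replaced by a constant (`dB_eq`), and the same integral over
any line which stays away from `w` vanishes. Comparing the graph with the line given by the affine
jet at `x + i y` of the harmonic extension of `A` shows that `F - f` is at most `δ` times an average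
of `|A - jet|` (`enorm_dB_sub_flat_le`). By Taylor's formula along paths to the boundary
(`enorm_sub_jet_le`), `|A - jet|` is itself an average of `|f|`. Thus `|F - f| ≤ δ T |f|` with `T` a
superposition of translation-dilations that is bounded in the weighted norm, and for small `δ` this
term can be absorbed. Absorption needs the left-hand side to be finite, which holds for the truncated
weights `y / (y + ε) ^ α` (`wNorm_flat_lt_top`); then `ε → 0`.

*Third estimate* (`exists_lower`). The disc of radius `y / 2` about `z = x + i (A x + y)` lies in the
domain, and Cauchy's formula on its concentric circles gives `D^α g(z) ≥ c y ^ (1 - α) |g'(z)|`. It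
remains to integrate in the coordinates `(x, y)`.
-/

open MeasureTheory
namespace BeurlingBesov
open Set Filter Topology
open scoped ENNReal NNReal

/-! ### Weighted norms on the half-plane and superpositions of translation-dilations -/

section

lemma enorm_sub_le_of_hasDerivAt {q q' : ℝ → ℝ} {a b : ℝ} (hab : a ≤ b)
    (h : ∀ x ∈ Icc a b, HasDerivAt q (q' x) x) (hc : ContinuousOn q' (Icc a b)) :
    ‖q b - q a‖ₑ ≤ ∫⁻ x in Ioo a b, ‖q' x‖ₑ := by
  have hi : IntervalIntegrable q' volume a b :=
    ContinuousOn.intervalIntegrable (by rwa [uIcc_of_le hab])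
  rw [← intervalIntegral.integral_eq_sub_of_hasDerivAt (by rwa [uIcc_of_le hab]) hi,
    intervalIntegral.integral_of_le hab, ← restrict_Ioo_eq_restrict_Ioc]
  exact enorm_integral_le_lintegral_enorm _

lemma enorm_sub_le_of_tendsto {q q' : ℝ → ℝ} {T l : ℝ} (hT : 0 < T)
    (h : ∀ x ∈ Ioc 0 T, HasDerivAt q (q' x) x) (hc : ContinuousOn q' (Ioc 0 T))
    (hl : Tendsto q (𝓝[>] 0) (𝓝 l)) :
    ‖q T - l‖ₑ ≤ ∫⁻ x in Ioo 0 T, ‖q' x‖ₑ := by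
  have h1 : Tendsto (fun a => ‖q T - q a‖ₑ) (𝓝[>] 0) (𝓝 ‖q T - l‖ₑ) :=
    ((continuous_enorm.tendsto _).comp (tendsto_const_nhds.sub hl))
  refine le_of_tendsto h1 ?_
  filter_upwards [Ioo_mem_nhdsGT hT] with a ha
  refine (enorm_sub_le_of_hasDerivAt ha.2.le (fun x hx => h x ⟨ha.1.trans_le hx.1, hx.2⟩)
    (hc.mono fun x hx => ⟨ha.1.trans_le hx.1, hx.2⟩)).trans ?_
  exact lintegral_mono_set (Ioo_subset_Ioo_left ha.1.le)

/-- Minkowski's integral inequality in the form of a Schur test: if the sections `F · σ` have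
`L^p` size at most `B σ * N ^ (1 / p)`, then the integral over `σ` has `L^p` size at most
`(∫ B) * N ^ (1 / p)`. It is Hölder's inequality with the weight `B`. -/
lemma lintegral_lintegral_rpow_le {X S : Type*} [MeasurableSpace X] [MeasurableSpace S]
    {μ : Measure X} {ν : Measure S} [SFinite μ] [SFinite ν] {p : ℝ} (hp : 1 < p)
    {F : X → S → ℝ≥0∞} (hF : Measurable (Function.uncurry F)) {B : S → ℝ≥0∞}
    (hBm : Measurable B) (hB0 : ∀ᵐ σ ∂ν, B σ ≠ 0) (hBt : ∀ᵐ σ ∂ν, B σ ≠ ⊤) {N : ℝ≥0∞}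
    (hN : ∀ᵐ σ ∂ν, ∫⁻ x, F x σ ^ p ∂μ ≤ B σ ^ p * N) :
    ∫⁻ x, (∫⁻ σ, F x σ ∂ν) ^ p ∂μ ≤ (∫⁻ σ, B σ ∂ν) ^ p * N := by
  have hp0 : 0 < p := by linarith
  have hpq := Real.HolderConjugate.conjExponent hp
  set q := p.conjExponent with hq
  have hq0 : 0 < q := hpq.symm.pos
  have hpq1 : 1 / q * p = p - 1 := by
    have := hpq.inv_add_inv_eq_one
    field_simp at this ⊢
    nlinarith
  have key : ∀ x, (∫⁻ σ, F x σ ∂ν) ^ p ≤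
      (∫⁻ σ, F x σ ^ p * B σ ^ (1 - p) ∂ν) * (∫⁻ σ, B σ ∂ν) ^ (p - 1) := by
    intro x
    have hFx : Measurable (F x) := hF.of_uncurry_left
    have e1 : ∫⁻ σ, F x σ ∂ν =
        ∫⁻ σ, ((fun σ => F x σ * B σ ^ (-(1 / q))) * (fun σ => B σ ^ (1 / q))) σ ∂ν := by
      apply lintegral_congr_ae
      filter_upwards [hB0, hBt] with σ h0 ht
      simp only [Pi.mul_apply]
      rw [mul_assoc, ← ENNReal.rpow_add _ _ h0 ht]
      simp
    have h2 := ENNReal.lintegral_mul_le_Lp_mul_Lq ν hpq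
      (f := fun σ => F x σ * B σ ^ (-(1 / q))) (g := fun σ => B σ ^ (1 / q))
      (hFx.mul (hBm.pow_const _)).aemeasurable (hBm.pow_const _).aemeasurable
    rw [e1]
    refine (ENNReal.rpow_le_rpow h2 hp0.le).trans ?_
    rw [ENNReal.mul_rpow_of_nonneg _ _ hp0.le, ← ENNReal.rpow_mul, ← ENNReal.rpow_mul,
      one_div_mul_cancel hp0.ne', ENNReal.rpow_one, hpq1]
    refine le_of_eq ?_
    congr 1
    · congr 1
      ext σ
      rw [ENNReal.mul_rpow_of_nonneg _ _ hp0.le, ← ENNReal.rpow_mul, neg_mul, hpq1, neg_sub]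
    · congr 2
      ext σ
      rw [← ENNReal.rpow_mul, one_div_mul_cancel hq0.ne', ENNReal.rpow_one]
  have hm : Measurable (fun z : X × S => F z.1 z.2 ^ p * B z.2 ^ (1 - p)) :=
    (hF.pow_const _).mul ((hBm.comp measurable_snd).pow_const _)
  calc ∫⁻ x, (∫⁻ σ, F x σ ∂ν) ^ p ∂μ
      ≤ ∫⁻ x, (∫⁻ σ, F x σ ^ p * B σ ^ (1 - p) ∂ν) * (∫⁻ σ, B σ ∂ν) ^ (p - 1) ∂μ :=
        lintegral_mono key
    _ = (∫⁻ x, ∫⁻ σ, F x σ ^ p * B σ ^ (1 - p) ∂ν ∂μ) * (∫⁻ σ, B σ ∂ν) ^ (p - 1) :=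
        lintegral_mul_const _ hm.lintegral_prod_right'
    _ = (∫⁻ σ, ∫⁻ x, F x σ ^ p * B σ ^ (1 - p) ∂μ ∂ν) * (∫⁻ σ, B σ ∂ν) ^ (p - 1) := by
        rw [lintegral_lintegral_swap hm.aemeasurable]
    _ ≤ (∫⁻ σ, B σ * N ∂ν) * (∫⁻ σ, B σ ∂ν) ^ (p - 1) := by
        gcongr 1
        apply lintegral_mono_ae
        filter_upwards [hB0, hBt, hN] with σ h0 ht hn
        rw [lintegral_mul_const _ ((hF.of_uncurry_right).pow_const _)]
        calc _ ≤ (B σ ^ p * N) * B σ ^ (1 - p) := by gcongr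
          _ = B σ ^ (p + (1 - p)) * N := by
            rw [ENNReal.rpow_add _ _ h0 ht]; ring
          _ = B σ * N := by simp
    _ = (∫⁻ σ, B σ ∂ν) ^ (1 + (p - 1)) * N := by
        rw [lintegral_mul_const _ hBm, ENNReal.rpow_add_of_nonneg _ _ zero_le_one (by linarith),
          ENNReal.rpow_one]
        ring
    _ = _ := by congr 2; ring

/-- The `p`-th power of the weighted norm `‖ρ(y) f(x, y)‖_{L^p}` on the half-plane `y > 0`. -/
noncomputable def wNorm (p : ℝ) (ρ : ℝ → ℝ≥0∞) (f : ℝ → ℝ → ℝ≥0∞) : ℝ≥0∞ :=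
  ∫⁻ y in Ioi (0 : ℝ), ∫⁻ x : ℝ, (ρ y * f x y) ^ p

lemma lintegral_Ioi_comp_mul_right (G : ℝ → ℝ≥0∞) {s : ℝ} (hs : 0 < s) :
    ∫⁻ y in Ioi (0 : ℝ), G (y * s) = ENNReal.ofReal s⁻¹ * ∫⁻ y in Ioi (0 : ℝ), G y := by
  rw [← lintegral_indicator measurableSet_Ioi, ← lintegral_indicator measurableSet_Ioi]
  have h := (Homeomorph.mulRight₀ s hs.ne').measurableEmbedding
  have e : ∀ y, (Ioi (0 : ℝ)).indicator (fun y => G (y * s)) y =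
      (Ioi (0 : ℝ)).indicator G (Homeomorph.mulRight₀ s hs.ne' y) := by
    intro y
    simp only [indicator, mem_Ioi, Homeomorph.coe_mulRight₀, mul_pos_iff_of_pos_right hs]
  simp_rw [e]
  rw [← h.lintegral_map]
  have : Measure.map (⇑(Homeomorph.mulRight₀ s hs.ne')) volume
      = ENNReal.ofReal |s⁻¹| • (volume : Measure ℝ) := by
    rw [← Real.map_volume_mul_right hs.ne']; rfl
  rw [this, lintegral_smul_measure, abs_of_pos (inv_pos.2 hs), smul_eq_mul]

/-- Translations and dilations act boundedly on the weighted space. -/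
lemma wNorm_scale {p : ℝ} (hp : 0 < p) {ρ₁ ρ₂ : ℝ → ℝ≥0∞} {b : ℝ≥0∞} {s θ : ℝ} (hs : 0 < s)
    (hbt : b ≠ ⊤) (hb : ∀ y, 0 < y → ρ₁ y ≤ b * ρ₂ (y * s)) (f : ℝ → ℝ → ℝ≥0∞) :
    ∫⁻ y in Ioi (0 : ℝ), ∫⁻ x : ℝ, (ρ₁ y * f (x + y * θ) (y * s)) ^ p ≤
      b ^ p * (ENNReal.ofReal s⁻¹ * wNorm p ρ₂ f) := by
  have h1 : ∀ y ∈ Ioi (0 : ℝ), ∫⁻ x : ℝ, (ρ₁ y * f (x + y * θ) (y * s)) ^ p ≤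
      ∫⁻ x : ℝ, (b * ρ₂ (y * s) * f x (y * s)) ^ p := by
    intro y hy
    rw [lintegral_add_right_eq_self (fun x => (ρ₁ y * f x (y * s)) ^ p)]
    apply lintegral_mono
    intro x
    dsimp only
    gcongr
    exact hb y hy
  refine (setLIntegral_mono' measurableSet_Ioi h1).trans ?_
  rw [lintegral_Ioi_comp_mul_right (fun y => ∫⁻ x : ℝ, (b * ρ₂ y * f x y) ^ p) hs, wNorm]
  rw [mul_left_comm]
  gcongr
  have : ∀ y x, (b * ρ₂ y * f x y) ^ p = b ^ p * (ρ₂ y * f x y) ^ p := by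
    intro y x; rw [mul_assoc, ENNReal.mul_rpow_of_nonneg _ _ hp.le]
  simp_rw [this]
  have hb' : b ^ p ≠ ⊤ := ENNReal.rpow_ne_top_of_nonneg hp.le hbt
  simp_rw [lintegral_const_mul' _ _ hb']
  exact le_rfl

/-- Superpositions of translation-dilations act boundedly on the weighted space. -/
lemma wNorm_operator {S : Type*} [MeasurableSpace S] {ν : Measure S} [SFinite ν] {p : ℝ}
    (hp : 1 < p) {ρ₁ ρ₂ : ℝ → ℝ≥0∞} (hρ : Measurable ρ₁) {f : ℝ → ℝ → ℝ≥0∞}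
    (hf : Measurable (Function.uncurry f)) {k b : S → ℝ≥0∞} {θ s : S → ℝ}
    (hk : Measurable k) (hbm : Measurable b) (hθ : Measurable θ) (hsm : Measurable s)
    (hs : ∀ᵐ σ ∂ν, 0 < s σ) (hk0 : ∀ᵐ σ ∂ν, k σ ≠ 0 ∧ k σ ≠ ⊤)
    (hb0 : ∀ᵐ σ ∂ν, b σ ≠ 0 ∧ b σ ≠ ⊤)
    (hb : ∀ᵐ σ ∂ν, ∀ y, 0 < y → ρ₁ y ≤ b σ * ρ₂ (y * s σ)) :
    wNorm p ρ₁ (fun x y => ∫⁻ σ, k σ * f (x + y * θ σ) (y * s σ) ∂ν) ≤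
      (∫⁻ σ, k σ * (b σ * ENNReal.ofReal (s σ ^ (-(1 / p)))) ∂ν) ^ p * wNorm p ρ₂ f := by
  have hp0 : 0 < p := by linarith
  let F : ℝ × ℝ → S → ℝ≥0∞ := fun z σ => ρ₁ z.1 * (k σ * f (z.2 + z.1 * θ σ) (z.1 * s σ))
  have hfm : Measurable (fun w : (ℝ × ℝ) × S => f (w.1.2 + w.1.1 * θ w.2) (w.1.1 * s w.2)) := by
    have : Measurable (fun w : (ℝ × ℝ) × S => (w.1.2 + w.1.1 * θ w.2, w.1.1 * s w.2)) := by
      fun_prop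
    exact hf.comp this
  have hF : Measurable (Function.uncurry F) := by
    simp only [F, Function.uncurry_def]
    fun_prop
  have e : wNorm p ρ₁ (fun x y => ∫⁻ σ, k σ * f (x + y * θ σ) (y * s σ) ∂ν) =
      ∫⁻ z, (∫⁻ σ, F z σ ∂ν) ^ p ∂((volume.restrict (Ioi (0 : ℝ))).prod volume) := by
    rw [lintegral_prod _ (by exact (hF.lintegral_prod_right'.pow_const p).aemeasurable)]
    simp only [wNorm, F]
    congr 1; ext y; congr 1; ext x
    rw [lintegral_const_mul]
    fun_prop
  rw [e]
  refine lintegral_lintegral_rpow_le hp hF (by fun_prop) ?_ ?_ ?_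
  · filter_upwards [hk0, hb0, hs] with σ h1 h2 h3
    simp only [ne_eq, mul_eq_zero, not_or, ENNReal.ofReal_eq_zero, not_le]
    exact ⟨h1.1, h2.1, by positivity⟩
  · filter_upwards [hk0, hb0, hs] with σ h1 h2 h3
    exact ENNReal.mul_ne_top h1.2 (ENNReal.mul_ne_top h2.2 ENNReal.ofReal_ne_top)
  · filter_upwards [hk0, hb0, hs, hb] with σ h1 h2 h3 h4
    rw [lintegral_prod _ (by exact (hF.of_uncurry_right.pow_const p).aemeasurable)]
    have e2 : ∀ y x, F (y, x) σ ^ p =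
        k σ ^ p * (ρ₁ y * f (x + y * θ σ) (y * s σ)) ^ p := by
      intro y x
      simp only [F]
      rw [mul_left_comm, ENNReal.mul_rpow_of_nonneg _ _ hp0.le]
    simp_rw [e2, lintegral_const_mul' _ _ (ENNReal.rpow_ne_top_of_nonneg hp0.le h1.2)]
    refine (mul_le_mul_right (wNorm_scale hp0 h3 h2.2 h4 f) _).trans (le_of_eq ?_)
    rw [ENNReal.mul_rpow_of_nonneg _ _ hp0.le, ENNReal.mul_rpow_of_nonneg _ _ hp0.le,
      ENNReal.ofReal_rpow_of_nonneg (by positivity) hp0.le, ← Real.rpow_mul h3.le, neg_mul,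
      one_div_mul_cancel hp0.ne', Real.rpow_neg_one]
    ring

end

/-! ### Potentials of `A` and affine jets -/

section

lemma integrable_kernel_bound {g : ℝ → ℝ} (hg : Continuous g) {C : ℝ}
    (hC : ∀ s, |g s| ≤ C * (1 + s ^ 2)) :
    Integrable (fun s : ℝ => g s / (1 + s ^ 2) ^ 2) := by
  refine (integrable_inv_one_add_sq.const_mul C).mono' ?_ ?_
  · exact (Continuous.div hg (by fun_prop) (fun s => by positivity)).aestronglyMeasurable
  · refine Eventually.of_forall fun s => ?_
    rw [Real.norm_eq_abs, abs_div, abs_of_pos (by positivity : (0 : ℝ) < (1 + s ^ 2) ^ 2)]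
    rw [div_le_iff₀ (by positivity)]
    calc |g s| ≤ C * (1 + s ^ 2) := hC s
      _ = C * (1 + s ^ 2)⁻¹ * (1 + s ^ 2) ^ 2 := by field_simp

lemma tendsto_div_one_add_sq_top (a b : ℝ) :
    Tendsto (fun s : ℝ => (a * s + b) / (1 + s ^ 2)) atTop (𝓝 0) := by
  have h : ((Polynomial.C a * Polynomial.X + Polynomial.C b : Polynomial ℝ)).degree <
      (Polynomial.X ^ 2 + Polynomial.C 1 : Polynomial ℝ).degree := by
    rw [Polynomial.degree_X_pow_add_C (by norm_num)]
    exact lt_of_le_of_lt (Polynomial.degree_linear_le) (by norm_num)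
  have := Polynomial.div_tendsto_atTop_zero_of_degree_lt _ _ h
  refine this.congr fun s => ?_
  simp [add_comm]

lemma tendsto_div_one_add_sq_bot (a b : ℝ) :
    Tendsto (fun s : ℝ => (a * s + b) / (1 + s ^ 2)) atBot (𝓝 0) := by
  have := (tendsto_div_one_add_sq_top (-a) b).comp tendsto_neg_atBot_atTop
  refine this.congr fun s => ?_
  simp

lemma integral_kernel_zero : ∫ s : ℝ, 1 / (1 + s ^ 2) ^ 2 = Real.pi / 2 := by
  have hd : ∀ s : ℝ, HasDerivAt (fun s : ℝ => (Real.arctan s + (1 * s + 0) / (1 + s ^ 2)) / 2)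
      (1 / (1 + s ^ 2) ^ 2) s := by
    intro s
    have h0 : (1 + s ^ 2) ≠ 0 := by positivity
    have := ((Real.hasDerivAt_arctan s).add
      ((((hasDerivAt_id s).const_mul 1).add_const 0).div
        (((hasDerivAt_id s).pow 2).const_add 1) h0)).div_const 2
    convert! this using 1
    simp
    field_simp
    ring
  rw [integral_of_hasDerivAt_of_tendsto hd (integrable_kernel_bound (g := fun _ => 1)
    (by fun_prop) (C := 1) (fun s => by simp; positivity))
    (m := (-(Real.pi / 2) + 0) / 2) (n := (Real.pi / 2 + 0) / 2)
    (((tendsto_nhds_of_tendsto_nhdsWithin Real.tendsto_arctan_atBot).add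
      (tendsto_div_one_add_sq_bot 1 0)).div_const 2)
    (((tendsto_nhds_of_tendsto_nhdsWithin Real.tendsto_arctan_atTop).add
      (tendsto_div_one_add_sq_top 1 0)).div_const 2)]
  ring

lemma integral_kernel_two : ∫ s : ℝ, s ^ 2 / (1 + s ^ 2) ^ 2 = Real.pi / 2 := by
  have hd : ∀ s : ℝ, HasDerivAt (fun s : ℝ => (Real.arctan s - (1 * s + 0) / (1 + s ^ 2)) / 2)
      (s ^ 2 / (1 + s ^ 2) ^ 2) s := by
    intro s
    have h0 : (1 + s ^ 2) ≠ 0 := by positivity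
    have := ((Real.hasDerivAt_arctan s).sub
      ((((hasDerivAt_id s).const_mul 1).add_const 0).div
        (((hasDerivAt_id s).pow 2).const_add 1) h0)).div_const 2
    convert! this using 1
    simp
    field_simp
    ring
  rw [integral_of_hasDerivAt_of_tendsto hd (integrable_kernel_bound (g := fun s => s ^ 2)
    (by fun_prop) (C := 1) (fun s => by simp))
    (m := (-(Real.pi / 2) - 0) / 2) (n := (Real.pi / 2 - 0) / 2)
    (((tendsto_nhds_of_tendsto_nhdsWithin Real.tendsto_arctan_atBot).sub
      (tendsto_div_one_add_sq_bot 1 0)).div_const 2)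
    (((tendsto_nhds_of_tendsto_nhdsWithin Real.tendsto_arctan_atTop).sub
      (tendsto_div_one_add_sq_top 1 0)).div_const 2)]
  ring

lemma integral_kernel_one : ∫ s : ℝ, s / (1 + s ^ 2) ^ 2 = 0 := by
  have h := integral_neg_eq_self (fun s : ℝ => s / (1 + s ^ 2) ^ 2) volume
  have h2 : ∫ s : ℝ, (-s) / (1 + (-s) ^ 2) ^ 2 = - ∫ s : ℝ, s / (1 + s ^ 2) ^ 2 := by
    rw [← integral_neg]; congr 1; ext s; simp [neg_div]
  rw [h2] at h
  linarith

/-- The potentials `∫ A(t) (t - z)⁻ⁿ dt`; up to constants they are the Cauchy integral of `A` on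
the upper half-plane and its complex derivatives. -/
noncomputable def cz (A : ℝ → ℝ) (n : ℕ) (z : ℂ) : ℂ := ∫ t : ℝ, (A t : ℂ) / ((t : ℂ) - z) ^ n

lemma im_le_norm_sub (t : ℝ) (z : ℂ) : |z.im| ≤ ‖(t : ℂ) - z‖ := by
  have := Complex.abs_im_le_norm ((t : ℂ) - z)
  simpa using this

lemma sub_ne_zero_of_im {z : ℂ} (hz : 0 < z.im) (t : ℝ) : (t : ℂ) - z ≠ 0 := by
  rw [← norm_pos_iff]
  exact (abs_pos.2 hz.ne').trans_le (im_le_norm_sub t z)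

variable {A : ℝ → ℝ}

lemma continuous_cz_integrand (hA : Continuous A) (n : ℕ) {z : ℂ} (hz : 0 < z.im) :
    Continuous (fun t : ℝ => (A t : ℂ) / ((t : ℂ) - z) ^ n) :=
  Continuous.div (by fun_prop) (by fun_prop) (fun t => pow_ne_zero _ (sub_ne_zero_of_im hz t))

lemma integrable_cz (hA : Continuous A) (hs : HasCompactSupport A) (n : ℕ) {z : ℂ}
    (hz : 0 < z.im) : Integrable (fun t : ℝ => (A t : ℂ) / ((t : ℂ) - z) ^ n) := by
  refine (continuous_cz_integrand hA n hz).integrable_of_hasCompactSupport ?_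
  refine hs.mono fun t ht => ?_
  simp only [Function.mem_support] at ht ⊢
  intro h
  simp [h] at ht

lemma hasDerivAt_cz (hA : Continuous A) (hs : HasCompactSupport A) (n : ℕ) {z : ℂ}
    (hz : 0 < z.im) : HasDerivAt (cz A n) (n * cz A (n + 1) z) z := by
  have hi : Integrable (fun t => |A t|) :=
    (hA.integrable_of_hasCompactSupport hs).abs
  have him : ∀ w ∈ Metric.ball z (z.im / 2), z.im / 2 < w.im := by
    intro w hw
    have h1 := Complex.abs_im_le_norm (w - z)
    rw [Metric.mem_ball, dist_eq_norm] at hw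
    have := (abs_le.1 (h1.trans hw.le)).1
    have h2 := (abs_lt.1 (h1.trans_lt hw)).1
    simp at h2
    linarith
  have key := hasDerivAt_integral_of_dominated_loc_of_deriv_le
    (μ := (volume : Measure ℝ)) (s := Metric.ball z (z.im / 2)) (x₀ := z)
    (F := fun w t => (A t : ℂ) / ((t : ℂ) - w) ^ n)
    (F' := fun w t => n * ((A t : ℂ) / ((t : ℂ) - w) ^ (n + 1)))
    (bound := fun t => n * (|A t| * ((z.im / 2) ^ (n + 1))⁻¹))
    (Metric.ball_mem_nhds z (by positivity)) ?_ (integrable_cz hA hs n hz) ?_ ?_ ?_ ?_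
  · have := key.2
    rw [integral_const_mul] at this
    exact this
  · filter_upwards [Metric.ball_mem_nhds z (by positivity : 0 < z.im / 2)] with w hw
    exact (continuous_cz_integrand hA n (by linarith [him w hw])).aestronglyMeasurable
  · exact ((continuous_cz_integrand hA (n + 1) hz).aestronglyMeasurable).const_mul _
  · refine Eventually.of_forall fun t w hw => ?_
    have h1 := him w hw
    rw [norm_mul, norm_div, norm_pow, Complex.norm_natCast, Complex.norm_real, Real.norm_eq_abs,
      div_eq_mul_inv]
    gcongr
    have := im_le_norm_sub t w
    rw [abs_of_pos (by linarith)] at this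
    linarith
  · exact ((hi.mul_const _).const_mul _)
  · refine Eventually.of_forall fun t w hw => ?_
    have h1 := him w hw
    have h0 := sub_ne_zero_of_im (z := w) (by linarith) t
    have hd : HasDerivAt (fun w : ℂ => ((t : ℂ) - w) ^ n) (n * ((t : ℂ) - w) ^ (n - 1) * (-1)) w :=
      ((hasDerivAt_id w).const_sub (t : ℂ)).pow n
    have := (hasDerivAt_const w (A t : ℂ)).div hd (pow_ne_zero n h0)
    convert! this using 1
    rcases n with _ | n
    · simp
    · simp only [Nat.add_sub_cancel]
      field_simp
      ring

/-- The slope of the affine jet based at `z`; it is the Poisson extension of the derivative of `A`. -/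
noncomputable def slp (A : ℝ → ℝ) (z : ℂ) : ℝ := Real.pi⁻¹ * (cz A 2 z).im

/-- The imaginary part, at the boundary point `x`, of the first-order Taylor polynomial at `z` of
`π⁻¹ * cz A 1`, the holomorphic function on the upper half-plane whose imaginary part is the Poisson
extension of `A`. For fixed `z` it is an affine function of `x`. -/
noncomputable def jet (A : ℝ → ℝ) (z : ℂ) (x : ℝ) : ℝ :=
  Real.pi⁻¹ * (cz A 1 z + ((x : ℂ) - z) * cz A 2 z).im

lemma jet_eq (z : ℂ) (x : ℝ) : jet A z x = jet A z z.re + slp A z * (x - z.re) := by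
  simp only [jet, slp, Complex.add_im, Complex.mul_im, Complex.sub_re, Complex.sub_im,
    Complex.ofReal_re, Complex.ofReal_im]
  ring

lemma integral_comp_affine (g : ℝ → ℝ) (x : ℝ) {y : ℝ} (hy : 0 < y) :
    ∫ t, g t = y * ∫ s, g (x + y * s) := by
  have h1 := Measure.integral_comp_mul_left (fun s => g (x + s)) y
  rw [h1, integral_add_left_eq_self g x, abs_of_pos (inv_pos.2 hy), smul_eq_mul,
    mul_inv_cancel_left₀ hy.ne']

lemma slp_eq (hA : Continuous A) (hs : HasCompactSupport A) (x : ℝ) {y : ℝ} (hy : 0 < y) :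
    slp A ⟨x, y⟩ = 2 / Real.pi * ∫ s, A (x + y * s) / y * (s / (1 + s ^ 2) ^ 2) := by
  have h1 : (cz A 2 ⟨x, y⟩).im = ∫ t, ((A t : ℂ) / ((t : ℂ) - (⟨x, y⟩ : ℂ)) ^ 2).im := by
    rw [cz, ← RCLike.im_eq_complex_im,
      ← integral_im (integrable_cz (z := (⟨x, y⟩ : ℂ)) hA hs 2 hy)]
  rw [slp, h1, integral_comp_affine _ x hy, ← integral_const_mul, ← integral_const_mul,
    ← integral_const_mul]
  congr 1; ext s
  have e : (((x + y * s : ℝ) : ℂ) - ⟨x, y⟩) = (y : ℂ) * ⟨s, -1⟩ := by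
    apply Complex.ext <;> simp
  rw [e, mul_pow, Complex.div_im]
  have h2 : ((y : ℂ) ^ 2 * (⟨s, -1⟩ : ℂ) ^ 2).re = y ^ 2 * (s ^ 2 - 1) := by
    simp [pow_two]
  have h3 : ((y : ℂ) ^ 2 * (⟨s, -1⟩ : ℂ) ^ 2).im = y ^ 2 * (-2 * s) := by
    simp [pow_two]; ring
  have h4 : Complex.normSq ((y : ℂ) ^ 2 * (⟨s, -1⟩ : ℂ) ^ 2) = y ^ 4 * (1 + s ^ 2) ^ 2 := by
    rw [Complex.normSq_apply, h2, h3]; ring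
  rw [h2, h3, h4]
  simp only [Complex.ofReal_re, Complex.ofReal_im]
  have : (1 + s ^ 2) ≠ 0 := by positivity
  field_simp
  ring

/-- At its base point the jet is an average of `A`; its kernel, up to a factor, is `(1 + s²)⁻²`
rather than the Poisson kernel, as the expansion point lies at height `y` above the boundary. -/
lemma jet_base_eq (hA : Continuous A) (hs : HasCompactSupport A) (x : ℝ) {y : ℝ} (hy : 0 < y) :
    jet A ⟨x, y⟩ x = 2 / Real.pi * ∫ s, A (x + y * s) * (1 / (1 + s ^ 2) ^ 2) := by
  have hi : Integrable (fun t : ℝ => (A t : ℂ) / ((t : ℂ) - ⟨x, y⟩) ^ 1 +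
      ((x : ℂ) - ⟨x, y⟩) * ((A t : ℂ) / ((t : ℂ) - ⟨x, y⟩) ^ 2)) :=
    (integrable_cz hA hs 1 hy).add ((integrable_cz hA hs 2 hy).const_mul _)
  have h1 : (cz A 1 (⟨x, y⟩ : ℂ) + ((x : ℂ) - (⟨x, y⟩ : ℂ)) * cz A 2 (⟨x, y⟩ : ℂ)).im =
      ∫ t : ℝ, ((A t : ℂ) / ((t : ℂ) - (⟨x, y⟩ : ℂ)) ^ 1 +
      ((x : ℂ) - (⟨x, y⟩ : ℂ)) * ((A t : ℂ) / ((t : ℂ) - (⟨x, y⟩ : ℂ)) ^ 2)).im := by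
    rw [cz, cz, ← integral_const_mul, ← integral_add
      (integrable_cz (z := (⟨x, y⟩ : ℂ)) hA hs 1 hy)
      ((integrable_cz (z := (⟨x, y⟩ : ℂ)) hA hs 2 hy).const_mul _),
      ← RCLike.im_eq_complex_im, ← integral_im hi]
  rw [jet, h1, integral_comp_affine _ x hy, ← integral_const_mul, ← integral_const_mul,
    ← integral_const_mul]
  congr 1; ext s
  have e : (((x + y * s : ℝ) : ℂ) - ⟨x, y⟩) = (y : ℂ) * ⟨s, -1⟩ := by
    apply Complex.ext <;> simp
  have e' : ((x : ℂ) - ⟨x, y⟩) = (y : ℂ) * ⟨0, -1⟩ := by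
    apply Complex.ext <;> simp
  have hy' : (y : ℂ) ≠ 0 := by exact_mod_cast hy.ne'
  have h5 : (⟨s, -1⟩ : ℂ) ≠ 0 := by
    intro h; have := congrArg Complex.im h; simp at this
  have e3 : (A (x + y * s) : ℂ) / ((y : ℂ) * ⟨s, -1⟩) ^ 1 +
      (y : ℂ) * ⟨0, -1⟩ * ((A (x + y * s) : ℂ) / ((y : ℂ) * ⟨s, -1⟩) ^ 2) =
      ((A (x + y * s) / y : ℝ) : ℂ) * (⟨s, -2⟩ / (⟨s, -1⟩ : ℂ) ^ 2) := by
    have : (⟨s, -2⟩ : ℂ) = ⟨s, -1⟩ + ⟨0, -1⟩ := by apply Complex.ext <;> norm_num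
    rw [this]
    push_cast
    field_simp
  rw [e, e', e3, Complex.im_ofReal_mul, Complex.div_im]
  have h2 : ((⟨s, -1⟩ : ℂ) ^ 2).re = s ^ 2 - 1 := by
    simp [pow_two]
  have h3 : ((⟨s, -1⟩ : ℂ) ^ 2).im = -2 * s := by
    simp [pow_two]; ring
  have h4 : Complex.normSq ((⟨s, -1⟩ : ℂ) ^ 2) = (1 + s ^ 2) ^ 2 := by
    rw [Complex.normSq_apply, h2, h3]; ring
  rw [h2, h3, h4]
  have : (1 + s ^ 2) ≠ 0 := by positivity
  field_simp
  ring

lemma integrable_kernel_two : Integrable (fun s : ℝ => s ^ 2 / (1 + s ^ 2) ^ 2) :=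
  integrable_kernel_bound (g := fun s => s ^ 2) (by fun_prop) (C := 1) (fun s => by simp)

lemma integrable_kernel_zero : Integrable (fun s : ℝ => 1 / (1 + s ^ 2) ^ 2) :=
  integrable_kernel_bound (g := fun _ => 1) (by fun_prop) (C := 1)
    (fun s => by simp; positivity)

lemma integrable_kernel_one : Integrable (fun s : ℝ => s / (1 + s ^ 2) ^ 2) :=
  integrable_kernel_bound (g := fun s => s) (by fun_prop) (C := 1)
    (fun s => by rw [abs_le]; constructor <;> nlinarith [sq_nonneg (s + 1), sq_nonneg (s - 1)])

lemma integrable_mul_kernel (hA : Continuous A) (hs : HasCompactSupport A) (x : ℝ) {y : ℝ}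
    (hy : 0 < y) {g : ℝ → ℝ} (hg : Continuous g) :
    Integrable (fun s : ℝ => A (x + y * s) * (g s / (1 + s ^ 2) ^ 2)) := by
  refine Continuous.integrable_of_hasCompactSupport ?_ ?_
  · exact (by fun_prop : Continuous fun s => A (x + y * s)).mul
      (hg.div (by fun_prop) (fun s => by positivity))
  · have h : HasCompactSupport (fun s : ℝ => A (x + y * s)) := by
      have := hs.comp_homeomorph ((Homeomorph.mulLeft₀ y hy.ne').trans (Homeomorph.addLeft x))
      exact this
    exact h.mul_right

variable {δ : ℝ}

lemma abs_sub_le_of_lip (hδ : 0 ≤ δ) (hL : LipschitzWith (Real.toNNReal δ) A) (x y : ℝ) :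
    |A x - A y| ≤ δ * |x - y| := by
  have := hL.dist_le_mul x y
  rwa [Real.dist_eq, Real.dist_eq, Real.coe_toNNReal _ hδ] at this

/-- At its base point the jet is an average of `A` over the scale `y`. -/
lemma abs_jet_base_sub_le (hδ : 0 ≤ δ) (hL : LipschitzWith (Real.toNNReal δ) A)
    (hs : HasCompactSupport A) (x : ℝ) {y : ℝ} (hy : 0 < y) :
    |jet A ⟨x, y⟩ x - A x| ≤ δ * y := by
  have hpi := Real.pi_pos
  have e : jet A ⟨x, y⟩ x - A x =
      2 / Real.pi * ∫ s, (A (x + y * s) - A x) * (1 / (1 + s ^ 2) ^ 2) := by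
    simp_rw [sub_mul]
    rw [integral_sub (integrable_mul_kernel hL.continuous hs x hy (g := fun _ => 1)
      continuous_const) (integrable_kernel_zero.const_mul _), integral_const_mul,
      integral_kernel_zero, jet_base_eq hL.continuous hs x hy]
    field_simp
  have hb : ‖∫ s, (A (x + y * s) - A x) * (1 / (1 + s ^ 2) ^ 2)‖ ≤
      ∫ s : ℝ, (δ * y / 2) * (1 + s ^ 2)⁻¹ := by
    refine norm_integral_le_of_norm_le (integrable_inv_one_add_sq.const_mul _)
      (Eventually.of_forall fun s => ?_)
    have h1 := abs_sub_le_of_lip hδ hL (x + y * s) x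
    rw [add_sub_cancel_left, abs_mul, abs_of_pos hy] at h1
    rw [norm_mul, Real.norm_eq_abs, Real.norm_eq_abs, abs_of_pos (by positivity :
      (0 : ℝ) < 1 / (1 + s ^ 2) ^ 2)]
    have h2 : |s| ≤ (1 + s ^ 2) / 2 := by
      nlinarith [sq_nonneg (|s| - 1), sq_abs s]
    calc _ ≤ (δ * (y * ((1 + s ^ 2) / 2))) * (1 / (1 + s ^ 2) ^ 2) := by
            gcongr
            exact h1.trans (by gcongr)
      _ = _ := by field_simp
  rw [integral_const_mul, integral_univ_inv_one_add_sq, Real.norm_eq_abs] at hb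
  rw [e, abs_mul, abs_of_pos (by positivity : 0 < 2 / Real.pi)]
  calc _ ≤ 2 / Real.pi * (δ * y / 2 * Real.pi) := by gcongr
    _ = δ * y := by field_simp

/-- The formula for the slope at a point `x + κ y + i y` seen from the boundary point `x`. -/
lemma slp_eq_sub (hL : LipschitzWith (Real.toNNReal δ) A)
    (hs : HasCompactSupport A) (x κ : ℝ) {y : ℝ} (hy : 0 < y) :
    slp A ⟨x + κ * y, y⟩ =
      2 / Real.pi * ∫ s, (A (x + κ * y + y * s) - A x) / y * (s / (1 + s ^ 2) ^ 2) := by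
  rw [slp_eq hL.continuous hs _ hy]
  have h : ∀ s, (A (x + κ * y + y * s) - A x) / y * (s / (1 + s ^ 2) ^ 2) =
      A (x + κ * y + y * s) / y * (s / (1 + s ^ 2) ^ 2) - A x / y * (s / (1 + s ^ 2) ^ 2) := by
    intro s; ring
  simp_rw [h]
  rw [integral_sub, integral_const_mul (A x / y), integral_kernel_one]
  · simp
  · have := (integrable_mul_kernel hL.continuous hs (x + κ * y) hy (g := fun s => s)
      continuous_id).div_const y
    refine this.congr (Eventually.of_forall fun s => ?_)
    simp only []
    ring
  · exact integrable_kernel_one.const_mul _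

lemma abs_slp_le (hδ : 0 ≤ δ) (hL : LipschitzWith (Real.toNNReal δ) A)
    (hs : HasCompactSupport A) (x : ℝ) {y : ℝ} (hy : 0 < y) :
    |slp A ⟨x, y⟩| ≤ δ := by
  have hpi := Real.pi_pos
  have e := slp_eq_sub hL hs x 0 hy
  simp only [zero_mul, add_zero] at e
  have hb : ‖∫ s, (A (x + y * s) - A x) / y * (s / (1 + s ^ 2) ^ 2)‖ ≤
      ∫ s : ℝ, δ * (s ^ 2 / (1 + s ^ 2) ^ 2) := by
    refine norm_integral_le_of_norm_le (integrable_kernel_two.const_mul _)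
      (Eventually.of_forall fun s => ?_)
    have h1 := abs_sub_le_of_lip hδ hL (x + y * s) x
    rw [add_sub_cancel_left, abs_mul, abs_of_pos hy] at h1
    rw [norm_mul, Real.norm_eq_abs, Real.norm_eq_abs, abs_div, abs_div, abs_of_pos hy,
      abs_of_pos (by positivity : (0 : ℝ) < (1 + s ^ 2) ^ 2)]
    calc _ ≤ (δ * (y * |s|)) / y * (|s| / (1 + s ^ 2) ^ 2) := by gcongr
      _ = _ := by rw [← sq_abs s]; field_simp
  rw [integral_const_mul, integral_kernel_two, Real.norm_eq_abs] at hb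
  rw [e, abs_mul, abs_of_pos (by positivity : 0 < 2 / Real.pi)]
  calc _ ≤ 2 / Real.pi * (δ * (Real.pi / 2)) := by gcongr
    _ = δ := by field_simp

/-- The slopes converge nontangentially to the derivative wherever the latter exists. -/
lemma tendsto_slp (hδ : 0 ≤ δ) (hL : LipschitzWith (Real.toNNReal δ) A)
    (hs : HasCompactSupport A) (x κ : ℝ) (hx : DifferentiableAt ℝ A x) :
    Tendsto (fun y : ℝ => slp A ⟨x + κ * y, y⟩) (𝓝[>] 0) (𝓝 (deriv A x)) := by
  have hpi := Real.pi_pos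
  have key : Tendsto (fun y : ℝ => ∫ s, (A (x + κ * y + y * s) - A x) / y *
      (s / (1 + s ^ 2) ^ 2)) (𝓝[>] 0)
      (𝓝 (∫ s : ℝ, (deriv A x * (κ + s)) * (s / (1 + s ^ 2) ^ 2))) := by
    refine tendsto_integral_filter_of_dominated_convergence
      (fun s => δ * ((|κ| * |s| + s ^ 2) / (1 + s ^ 2) ^ 2)) ?_ ?_ ?_ ?_
    · refine Eventually.of_forall fun y => Continuous.aestronglyMeasurable ?_
      have := hL.continuous
      refine Continuous.mul (by fun_prop) (Continuous.div (by fun_prop) (by fun_prop) ?_)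
      intro s; positivity
    · filter_upwards [self_mem_nhdsWithin] with y hy
      rw [mem_Ioi] at hy
      refine Eventually.of_forall fun s => ?_
      have h1 := abs_sub_le_of_lip hδ hL (x + κ * y + y * s) x
      have e : x + κ * y + y * s - x = y * (κ + s) := by ring
      rw [e, abs_mul, abs_of_pos hy] at h1
      rw [norm_mul, Real.norm_eq_abs, Real.norm_eq_abs, abs_div, abs_div, abs_of_pos hy,
        abs_of_pos (by positivity : (0 : ℝ) < (1 + s ^ 2) ^ 2)]
      calc _ ≤ (δ * (y * (|κ| + |s|))) / y * (|s| / (1 + s ^ 2) ^ 2) := by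
            gcongr
            exact h1.trans (by gcongr; exact abs_add_le _ _)
        _ = _ := by rw [← sq_abs s]; field_simp
    · refine (integrable_kernel_bound (g := fun s => |κ| * |s| + s ^ 2) (by fun_prop)
        (C := |κ| + 1) (fun s => ?_)).const_mul _
      rw [abs_of_nonneg (by positivity)]
      nlinarith [abs_nonneg κ, abs_nonneg s, sq_nonneg (|s| - 1), sq_abs s,
        mul_nonneg (abs_nonneg κ) (sq_nonneg (|s| - 1)), mul_nonneg (abs_nonneg κ) (sq_nonneg s)]
    · refine Eventually.of_forall fun s => Tendsto.mul_const _ ?_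
      have h1 : HasDerivAt (fun y : ℝ => A (x + κ * y + y * s)) (deriv A x * (κ + s)) 0 := by
        have h2 : HasDerivAt (fun y : ℝ => x + κ * y + y * s) (κ + s) 0 := by
          have := (((hasDerivAt_id (0 : ℝ)).const_mul κ).const_add x).add
            ((hasDerivAt_id (0 : ℝ)).mul_const s)
          convert! this using 1
          simp
        have h3 : HasDerivAt A (deriv A x) (x + κ * 0 + 0 * s) := by
          simpa using hx.hasDerivAt
        exact h3.comp (0 : ℝ) h2
      have h4 := h1.tendsto_slope_zero_right
      refine h4.congr fun y => ?_
      simp [div_eq_inv_mul]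
  have h2 : ∫ s : ℝ, (deriv A x * (κ + s)) * (s / (1 + s ^ 2) ^ 2) =
      deriv A x * (Real.pi / 2) := by
    have : ∀ s : ℝ, (deriv A x * (κ + s)) * (s / (1 + s ^ 2) ^ 2) =
        deriv A x * κ * (s / (1 + s ^ 2) ^ 2) + deriv A x * (s ^ 2 / (1 + s ^ 2) ^ 2) := by
      intro s; ring
    simp_rw [this]
    rw [integral_add (integrable_kernel_one.const_mul _) (integrable_kernel_two.const_mul _),
      integral_const_mul, integral_const_mul, integral_kernel_one, integral_kernel_two]
    ring
  rw [h2] at key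
  have := key.const_mul (2 / Real.pi)
  have e3 : 2 / Real.pi * (deriv A x * (Real.pi / 2)) = deriv A x := by field_simp
  rw [e3] at this
  refine this.congr' ?_
  filter_upwards [self_mem_nhdsWithin] with y hy
  exact (slp_eq_sub hL hs x κ hy).symm

lemma abs_sub_jet_le (hδ : 0 ≤ δ) (hL : LipschitzWith (Real.toNNReal δ) A)
    (hs : HasCompactSupport A) (x₀ x : ℝ) {y : ℝ} (hy : 0 < y) :
    |A x - jet A ⟨x₀, y⟩ x| ≤ 2 * δ * (|x - x₀| + y) := by
  rw [jet_eq]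
  simp only []
  have h1 := abs_jet_base_sub_le hδ hL hs x₀ hy
  have h2 := abs_slp_le hδ hL hs x₀ hy
  have h3 := abs_sub_le_of_lip hδ hL x x₀
  have h4 : |slp A ⟨x₀, y⟩ * (x - x₀)| ≤ δ * |x - x₀| := by
    rw [abs_mul]; gcongr
  have e : A x - (jet A ⟨x₀, y⟩ x₀ + slp A ⟨x₀, y⟩ * (x - x₀)) =
      (A x - A x₀) - (jet A ⟨x₀, y⟩ x₀ - A x₀) - slp A ⟨x₀, y⟩ * (x - x₀) := by ring
  rw [e]
  have h5 := abs_sub ((A x - A x₀) - (jet A ⟨x₀, y⟩ x₀ - A x₀)) (slp A ⟨x₀, y⟩ * (x - x₀))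
  have h6 := abs_sub (A x - A x₀) (jet A ⟨x₀, y⟩ x₀ - A x₀)
  have : 0 ≤ δ * y := by positivity
  linarith

lemma tendsto_jet (hδ : 0 ≤ δ) (hL : LipschitzWith (Real.toNNReal δ) A)
    (hs : HasCompactSupport A) (x κ : ℝ) :
    Tendsto (fun y : ℝ => jet A ⟨x + κ * y, y⟩ x) (𝓝[>] 0) (𝓝 (A x)) := by
  rw [tendsto_iff_dist_tendsto_zero]
  have h : Tendsto (fun y : ℝ => 2 * δ * ((|κ| + 1) * y)) (𝓝[>] 0) (𝓝 0) := by
    have : Tendsto (fun y : ℝ => 2 * δ * ((|κ| + 1) * y)) (𝓝 0)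
      (𝓝 (2 * δ * ((|κ| + 1) * 0))) := Continuous.tendsto (by fun_prop) 0
    simp only [mul_zero] at this
    exact this.mono_left nhdsWithin_le_nhds
  refine squeeze_zero' (Eventually.of_forall fun _ => dist_nonneg) ?_ h
  filter_upwards [self_mem_nhdsWithin] with y hy
  rw [mem_Ioi] at hy
  rw [dist_comm, Real.dist_eq]
  refine (abs_sub_jet_le hδ hL hs _ x hy).trans (le_of_eq ?_)
  rw [sub_add_cancel_left, abs_neg, abs_mul, abs_of_pos hy]
  ring

end

/-! ### The flat model and Taylor expansion along paths -/

section

/-- The half-plane model `(1/π) ∫ A'(t) / (t - z)² dt = (2/π) ∫ A(t) / (t - z)³ dt` of the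
derivative of the Beurling transform, i.e. its linearisation at the flat domain. -/
noncomputable def flat (A : ℝ → ℝ) (z : ℂ) : ℂ := 2 / Real.pi * cz A 3 z

variable {A : ℝ → ℝ} {δ : ℝ}

lemma hasDerivAt_path (x κ η : ℝ) :
    HasDerivAt (fun η : ℝ => (⟨x + κ * η, η⟩ : ℂ)) (κ + Complex.I) η := by
  have h : (fun η : ℝ => (⟨x + κ * η, η⟩ : ℂ)) = fun η : ℝ => (x : ℂ) + (κ + Complex.I) * η := by
    ext η
    apply Complex.ext <;> simp
  rw [h]
  have := ((Complex.ofRealCLM.hasDerivAt (x := η)).const_mul (κ + Complex.I)).const_add (x : ℂ)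
  simpa using this

lemma continuousOn_flat_path (hA : Continuous A) (hs : HasCompactSupport A) (x κ : ℝ) :
    ContinuousOn (fun η : ℝ => flat A ⟨x + κ * η, η⟩) (Ioi 0) := by
  intro η hη
  have h1 : ContinuousAt (cz A 3) ⟨x + κ * η, η⟩ :=
    (hasDerivAt_cz (z := (⟨x + κ * η, η⟩ : ℂ)) hA hs 3 hη).continuousAt
  have h2 : ContinuousAt (fun η : ℝ => (⟨x + κ * η, η⟩ : ℂ)) η := (hasDerivAt_path x κ η).continuousAt
  exact (ContinuousAt.const_mul (ContinuousAt.comp (f := fun η : ℝ => (⟨x + κ * η, η⟩ : ℂ)) h1 h2)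
    _).continuousWithinAt

lemma hasDerivAt_im_of {J : ℝ → ℂ} {J' : ℂ} {η : ℝ} (h : HasDerivAt J J' η) :
    HasDerivAt (fun η => Real.pi⁻¹ * (J η).im) (Real.pi⁻¹ * J'.im) η :=
  (Complex.imCLM.hasFDerivAt.comp_hasDerivAt η h).const_mul _

lemma hasDerivAt_slp_path (hA : Continuous A) (hs : HasCompactSupport A) (x κ : ℝ) {η : ℝ}
    (hη : 0 < η) : HasDerivAt (fun η : ℝ => slp A ⟨x + κ * η, η⟩)
      ((κ + Complex.I) * flat A ⟨x + κ * η, η⟩).im η := by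
  have h := hasDerivAt_im_of (HasDerivAt.comp (h := fun η : ℝ => (⟨x + κ * η, η⟩ : ℂ)) η
    (hasDerivAt_cz hA hs 2 (z := (⟨x + κ * η, η⟩ : ℂ)) hη) (hasDerivAt_path x κ η))
  refine h.congr_deriv ?_
  rw [← Complex.im_ofReal_mul, flat]
  congr 1
  push_cast
  field_simp

lemma hasDerivAt_jet_path (hA : Continuous A) (hs : HasCompactSupport A) (x κ x' : ℝ) {η : ℝ}
    (hη : 0 < η) : HasDerivAt (fun η : ℝ => jet A ⟨x + κ * η, η⟩ x')
      (((x' : ℂ) - ⟨x + κ * η, η⟩) * (κ + Complex.I) * flat A ⟨x + κ * η, η⟩).im η := by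
  have h1 := hasDerivAt_cz hA hs 1 (z := (⟨x + κ * η, η⟩ : ℂ)) hη
  have h2 := hasDerivAt_cz hA hs 2 (z := (⟨x + κ * η, η⟩ : ℂ)) hη
  have h3 := h1.add (((hasDerivAt_id (⟨x + κ * η, η⟩ : ℂ)).const_sub (x' : ℂ)).mul h2)
  have h := hasDerivAt_im_of (HasDerivAt.comp (h := fun η : ℝ => (⟨x + κ * η, η⟩ : ℂ)) η h3
    (hasDerivAt_path x κ η))
  refine h.congr_deriv ?_
  rw [← Complex.im_ofReal_mul, flat]
  congr 1
  simp only [id]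
  push_cast
  field_simp
  ring

lemma enorm_im_le (z : ℂ) : ‖z.im‖ₑ ≤ ‖z‖ₑ := by
  rw [enorm_le_iff_norm_le, Real.norm_eq_abs]
  exact Complex.abs_im_le_norm z

/-- The fundamental theorem of calculus for the Poisson extension of `A'` along the slanted path
`η ↦ x + κ η + i η`, from the boundary up to height `T`. -/
lemma enorm_deriv_sub_slp_le (hδ : 0 ≤ δ) (hL : LipschitzWith (Real.toNNReal δ) A)
    (hs : HasCompactSupport A) (x κ : ℝ) (hx : DifferentiableAt ℝ A x) {T : ℝ} (hT : 0 < T) :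
    ‖slp A ⟨x + κ * T, T⟩ - deriv A x‖ₑ ≤
      ∫⁻ η in Ioo 0 T, ‖(κ : ℂ) + Complex.I‖ₑ * ‖flat A ⟨x + κ * η, η⟩‖ₑ := by
  refine (enorm_sub_le_of_tendsto hT
    (fun η hη => hasDerivAt_slp_path hL.continuous hs x κ hη.1) ?_
    (tendsto_slp hδ hL hs x κ hx)).trans ?_
  · refine Complex.continuous_im.comp_continuousOn (continuousOn_const.mul ?_)
    exact (continuousOn_flat_path hL.continuous hs x κ).mono fun η hη => hη.1
  · refine lintegral_mono fun η => (enorm_im_le _).trans ?_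
    rw [enorm_mul]

/-- The slanted paths of slopes `1` and `-1` issued from `x` and `x + h` meet at height `h / 2`. -/
lemma enorm_deriv_sub_deriv_le (hδ : 0 ≤ δ) (hL : LipschitzWith (Real.toNNReal δ) A)
    (hs : HasCompactSupport A) {x h : ℝ} (hh : 0 < h) (hx : DifferentiableAt ℝ A x)
    (hx' : DifferentiableAt ℝ A (x + h)) :
    ‖deriv A x - deriv A (x + h)‖ₑ ≤
      (∫⁻ η in Ioo 0 (h / 2), 2 * ‖flat A ⟨x + η, η⟩‖ₑ) +
      ∫⁻ η in Ioo 0 (h / 2), 2 * ‖flat A ⟨x + h - η, η⟩‖ₑ := by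
  have h1 := enorm_deriv_sub_slp_le hδ hL hs x 1 hx (T := h / 2) (by positivity)
  have h2 := enorm_deriv_sub_slp_le hδ hL hs (x + h) (-1) hx' (T := h / 2) (by positivity)
  have e : x + h + -1 * (h / 2) = x + 1 * (h / 2) := by ring
  rw [e] at h2
  have n1 : ‖((1 : ℝ) : ℂ) + Complex.I‖ₑ ≤ 2 := by
    refine (enorm_add_le _ _).trans ?_
    simp [← ofReal_norm, one_add_one_eq_two]
  have n2 : ‖((-1 : ℝ) : ℂ) + Complex.I‖ₑ ≤ 2 := by
    refine (enorm_add_le _ _).trans ?_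
    simp [← ofReal_norm, one_add_one_eq_two]
  have e2 : deriv A x - deriv A (x + h) =
      (slp A ⟨x + 1 * (h / 2), h / 2⟩ - deriv A (x + h)) -
      (slp A ⟨x + 1 * (h / 2), h / 2⟩ - deriv A x) := by ring
  rw [e2]
  refine (enorm_sub_le).trans ((add_comm _ _).le.trans (add_le_add (h1.trans ?_) (h2.trans ?_)))
  rotate_left
  · refine lintegral_mono fun η => ?_
    simp only [neg_one_mul, ← sub_eq_add_neg]
    gcongr
  · refine lintegral_mono fun η => ?_
    simp only [one_mul]
    gcongr

/-- Taylor's formula with integral remainder, from the jet at `x₀ + i y` to the boundary value at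
`x₀ + t`: the path goes up from height `y` to height `y + |t|`, and then straight down to
`x₀ + t`. -/
lemma enorm_sub_jet_le (hδ : 0 ≤ δ) (hL : LipschitzWith (Real.toNNReal δ) A)
    (hs : HasCompactSupport A) (x₀ t : ℝ) {y : ℝ} (hy : 0 < y) :
    ‖A (x₀ + t) - jet A ⟨x₀, y⟩ (x₀ + t)‖ₑ ≤
      (∫⁻ η in Ioo y (y + |t|), ENNReal.ofReal (2 * (y + |t|)) * ‖flat A ⟨x₀, η⟩‖ₑ) +
      ∫⁻ η in Ioo 0 (y + |t|), ENNReal.ofReal (2 * η) *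
        ‖flat A ⟨x₀ + t * (1 - η / (y + |t|)), η⟩‖ₑ := by
  set T := y + |t| with hTdef
  have hT : 0 < T := by positivity
  have hyT : y ≤ T := by simp [hTdef]
  have htT : |t| ≤ T := by rw [hTdef]; linarith
  have hA := hL.continuous
  have l1 := enorm_sub_le_of_hasDerivAt (q := fun η : ℝ => jet A ⟨x₀ + 0 * η, η⟩ (x₀ + t)) hyT
    (fun η hη => hasDerivAt_jet_path hA hs x₀ 0 (x₀ + t) (hy.trans_le hη.1)) ?_
  · have l2 := enorm_sub_le_of_tendsto
      (q := fun η : ℝ => jet A ⟨x₀ + t + (-t / T) * η, η⟩ (x₀ + t)) hT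
      (fun η hη => hasDerivAt_jet_path hA hs (x₀ + t) (-t / T) (x₀ + t) hη.1) ?_
      (tendsto_jet hδ hL hs (x₀ + t) (-t / T))
    · have e : x₀ + t + -t / T * T = x₀ := by field_simp; ring
      simp only [e] at l2
      simp only [zero_mul, add_zero] at l1
      have e2 : A (x₀ + t) - jet A ⟨x₀, y⟩ (x₀ + t) =
        (jet A ⟨x₀, T⟩ (x₀ + t) - jet A ⟨x₀, y⟩ (x₀ + t)) -
        (jet A ⟨x₀, T⟩ (x₀ + t) - A (x₀ + t)) := by ring
      rw [e2]
      refine (enorm_sub_le).trans (add_le_add (l1.trans ?_) (l2.trans ?_))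
      · refine setLIntegral_mono' measurableSet_Ioo fun η hη => (enorm_im_le _).trans ?_
        rw [enorm_mul]
        gcongr
        rw [enorm_mul, ← ofReal_norm, ← ofReal_norm, ← ENNReal.ofReal_mul (norm_nonneg _)]
        apply ENNReal.ofReal_le_ofReal
        have : ‖(((x₀ + t : ℝ) : ℂ)) - ⟨x₀, η⟩‖ ≤ 2 * T := by
          refine (Complex.norm_le_abs_re_add_abs_im _).trans ?_
          simp only [Complex.sub_re, Complex.sub_im, Complex.ofReal_re, Complex.ofReal_im,
            add_sub_cancel_left, zero_sub, abs_neg]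
          rw [abs_of_pos (hy.trans hη.1)]
          linarith [hη.2]
        simpa using this
      · refine setLIntegral_mono' measurableSet_Ioo fun η hη => (enorm_im_le _).trans ?_
        have e3 : x₀ + t + -t / T * η = x₀ + t * (1 - η / T) := by field_simp; ring
        rw [enorm_mul, e3]
        gcongr
        have e4 : (((x₀ + t : ℝ) : ℂ) - ⟨x₀ + t * (1 - η / T), η⟩) =
            -(η : ℂ) * (((-t / T : ℝ) : ℂ) + Complex.I) := by
          apply Complex.ext <;> simp
          field_simp
          ring
        rw [e4, mul_assoc, ← ofReal_norm]
        apply ENNReal.ofReal_le_ofReal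
        rw [norm_mul, norm_neg, Complex.norm_real, Real.norm_eq_abs, abs_of_pos hη.1, mul_comm 2]
        gcongr
        · exact hη.1.le
        · rw [← pow_two, norm_pow, ← Complex.normSq_eq_norm_sq, Complex.normSq_apply]
          simp
          have : |t / T| ≤ 1 := by
            rw [abs_div, abs_of_pos hT, div_le_one hT]; exact htT
          have h2 := (abs_le.1 this)
          rw [neg_div]
          nlinarith
    · refine Complex.continuous_im.comp_continuousOn (ContinuousOn.mul (ContinuousOn.mul
        (continuousOn_const.sub ?_) continuousOn_const) ?_)
      · exact fun η _ => (hasDerivAt_path _ _ η).continuousAt.continuousWithinAt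
      · exact (continuousOn_flat_path hA hs _ _).mono fun η hη => hη.1
  · refine Complex.continuous_im.comp_continuousOn (ContinuousOn.mul (ContinuousOn.mul
        (continuousOn_const.sub ?_) continuousOn_const) ?_)
    · exact fun η _ => (hasDerivAt_path _ _ η).continuousAt.continuousWithinAt
    · exact (continuousOn_flat_path hA hs _ _).mono fun η hη => hy.trans_le hη.1

end

/-! ### Kernel estimates -/

section

/-- The fundamental theorem of calculus on the whole line for Lipschitz complex-valued functions
vanishing at infinity. -/
lemma integral_eq_zero_of_lipschitz {G G' : ℝ → ℂ} {C : ℝ≥0} (hG : LipschitzWith C G)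
    (hd : ∀ᵐ x, HasDerivAt G (G' x) x) (hi : Integrable G') (hb : Tendsto G atBot (𝓝 0))
    (ht : Tendsto G atTop (𝓝 0)) : ∫ x, G' x = 0 := by
  have real : ∀ (g g' : ℝ → ℝ), LipschitzWith C g → (∀ᵐ x, HasDerivAt g (g' x) x) →
      Integrable g' → Tendsto g atBot (𝓝 0) → Tendsto g atTop (𝓝 0) → ∫ x, g' x = 0 := by
    intro g g' hg hd hi hb ht
    have h1 := intervalIntegral_tendsto_integral hi tendsto_neg_atTop_atBot tendsto_id
    have h2 : ∀ T : ℝ, ∫ x in (-T)..T, g' x = g T - g (-T) := by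
      intro T
      rw [← (hg.lipschitzOnWith.absolutelyContinuousOnInterval).integral_deriv_eq_sub]
      apply intervalIntegral.integral_congr_ae
      filter_upwards [hd] with x hx _
      exact hx.deriv.symm
    simp only [id, h2] at h1
    have h3 := ht.sub (hb.comp tendsto_neg_atTop_atBot)
    simp only [sub_zero] at h3
    exact tendsto_nhds_unique h1 h3
  have hre := real (fun x => (G x).re) (fun x => (G' x).re)
    (by
      have := Complex.reCLM.lipschitz.comp hG
      refine (this.weaken (K' := C) ?_)
      simp)
    (hd.mono fun x hx => Complex.reCLM.hasFDerivAt.comp_hasDerivAt x hx) hi.re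
    (by simpa [Function.comp_def] using (Complex.continuous_re.tendsto _).comp hb)
    (by simpa [Function.comp_def] using (Complex.continuous_re.tendsto _).comp ht)
  have him := real (fun x => (G x).im) (fun x => (G' x).im)
    (by
      have := Complex.imCLM.lipschitz.comp hG
      refine (this.weaken (K' := C) ?_)
      simp)
    (hd.mono fun x hx => Complex.imCLM.hasFDerivAt.comp_hasDerivAt x hx) hi.im
    (by simpa [Function.comp_def] using (Complex.continuous_im.tendsto _).comp hb)
    (by simpa [Function.comp_def] using (Complex.continuous_im.tendsto _).comp ht)
  apply Complex.ext
  · rw [← RCLike.re_eq_complex_re, ← integral_re hi]; exact hre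
  · rw [← RCLike.im_eq_complex_im, ← integral_im hi]; exact him

lemma norm_sq_base (x x₀ y : ℝ) : ‖(x : ℂ) - ⟨x₀, y⟩‖ ^ 2 = (x - x₀) ^ 2 + y ^ 2 := by
  rw [← Complex.normSq_eq_norm_sq, Complex.normSq_apply]
  simp
  ring

lemma norm_base_pos (x x₀ : ℝ) {y : ℝ} (hy : 0 < y) : 0 < ‖(x : ℂ) - ⟨x₀, y⟩‖ :=
  norm_pos_iff.2 (sub_ne_zero_of_im (z := (⟨x₀, y⟩ : ℂ)) hy x)

lemma abs_le_norm_base (x x₀ y : ℝ) : |x - x₀| ≤ ‖(x : ℂ) - ⟨x₀, y⟩‖ := by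
  simpa using Complex.abs_re_le_norm ((x : ℂ) - ⟨x₀, y⟩)

lemma le_norm_base (x x₀ : ℝ) {y : ℝ} (hy : 0 < y) : y ≤ ‖(x : ℂ) - ⟨x₀, y⟩‖ := by
  simpa [abs_of_pos hy] using Complex.abs_im_le_norm ((x : ℂ) - ⟨x₀, y⟩)

lemma integrable_norm_base (x₀ : ℝ) {y : ℝ} (hy : 0 < y) :
    Integrable (fun x : ℝ => (‖(x : ℂ) - ⟨x₀, y⟩‖ ^ 2)⁻¹) := by
  have h := (((integrable_inv_one_add_sq).comp_div hy.ne').comp_sub_right x₀).const_mul (y ^ 2)⁻¹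
  refine h.congr (Eventually.of_forall fun x => ?_)
  simp only [norm_sq_base]
  rw [← mul_inv]
  congr 1
  field_simp
  ring

variable {M : ℝ → ℂ} {c x₀ y : ℝ}

lemma integrable_inv_pow (hy : 0 < y) (hc : 0 < c) (hM : Continuous M)
    (h : ∀ x : ℝ, c * ‖(x : ℂ) - ⟨x₀, y⟩‖ ≤ ‖M x‖) (n : ℕ) :
    Integrable (fun x => (M x ^ (n + 2))⁻¹) := by
  have hM0 : ∀ x, 0 < ‖M x‖ := fun x =>
    (mul_pos hc (norm_base_pos x x₀ hy)).trans_le (h x)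
  refine ((integrable_norm_base x₀ hy).const_mul (((c * y) ^ n)⁻¹ * (c ^ 2)⁻¹)).mono' ?_ ?_
  · exact (Continuous.inv₀ (by fun_prop) (fun x => pow_ne_zero _
      (norm_pos_iff.1 (hM0 x)))).aestronglyMeasurable
  · refine Eventually.of_forall fun x => ?_
    rw [norm_inv, norm_pow, ← mul_inv, ← mul_inv, mul_assoc, ← mul_pow, pow_add]
    have h1 : c * y ≤ ‖M x‖ := le_trans (by gcongr; exact le_norm_base x x₀ hy) (h x)
    have := norm_base_pos x x₀ hy
    gcongr
    exact h x

lemma tendsto_inv_zero (hc : 0 < c) (h : ∀ x : ℝ, c * ‖(x : ℂ) - ⟨x₀, y⟩‖ ≤ ‖M x‖)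
    {l : Filter ℝ} (hl : Tendsto (fun x : ℝ => |x|) l atTop) :
    Tendsto (fun x => (M x)⁻¹) l (𝓝 0) := by
  refine tendsto_inv₀_cobounded.comp (tendsto_norm_atTop_iff_cobounded.1 ?_)
  have h1 : Tendsto (fun x => c * (|x| + -|x₀|)) l atTop :=
    Tendsto.const_mul_atTop hc (tendsto_atTop_add_const_right _ _ hl)
  refine tendsto_atTop_mono (fun x => ?_) h1
  refine le_trans ?_ (h x)
  gcongr
  refine le_trans ?_ (abs_le_norm_base x x₀ y)
  linarith [abs_sub_abs_le_abs_sub x x₀]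

/-- Negative powers of an affine function have a primitive vanishing at infinity. -/
lemma integral_inv_affine_pow (hy : 0 < y) (hc : 0 < c) {β κ : ℂ} (hβ : β ≠ 0)
    (h : ∀ x : ℝ, c * ‖(x : ℂ) - ⟨x₀, y⟩‖ ≤ ‖β * x + κ‖) (n : ℕ) :
    ∫ x : ℝ, ((β * x + κ) ^ (n + 2))⁻¹ = 0 := by
  have h0 : ∀ x : ℝ, β * x + κ ≠ 0 := fun x => norm_pos_iff.1
    ((mul_pos hc (norm_base_pos x x₀ hy)).trans_le (h x))
  have hd : ∀ x : ℝ, HasDerivAt (fun x : ℝ => -(((n + 1 : ℕ) : ℂ) * β)⁻¹ * ((β * x + κ)⁻¹) ^ (n + 1))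
      (((β * x + κ) ^ (n + 2))⁻¹) x := by
    intro x
    have h1 : HasDerivAt (fun x : ℝ => β * x + κ) β x := by
      simpa using ((Complex.ofRealCLM.hasDerivAt (x := x)).const_mul β).add_const κ
    have h2 := ((h1.fun_inv (h0 x)).fun_pow (n + 1)).const_mul (-(((n + 1 : ℕ) : ℂ) * β)⁻¹)
    refine h2.congr_deriv ?_
    have := h0 x
    have hn : ((n + 1 : ℕ) : ℂ) ≠ 0 := by exact_mod_cast Nat.succ_ne_zero n
    simp only [Nat.add_sub_cancel, inv_pow]
    generalize β * (x : ℂ) + κ = u at this ⊢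
    field_simp
    ring
  have ht : ∀ l : Filter ℝ, Tendsto (fun x : ℝ => |x|) l atTop → Tendsto (fun x : ℝ =>
      -(((n + 1 : ℕ) : ℂ) * β)⁻¹ * ((β * x + κ)⁻¹) ^ (n + 1)) l (𝓝 0) := by
    intro l hl
    have := ((tendsto_inv_zero hc h hl).pow (n + 1)).const_mul (-(((n + 1 : ℕ) : ℂ) * β)⁻¹)
    simpa using this
  rw [integral_of_hasDerivAt_of_tendsto hd (integrable_inv_pow hy hc (by fun_prop) h n)
    (ht _ tendsto_abs_atBot_atTop) (ht _ tendsto_abs_atTop_atTop), sub_zero]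

/-- The elementary estimate comparing the curved and the flat kernels: `l` and `m` stand for points of
the approximating line and of the graph, and `ζ` for the corresponding point of the flat boundary, all
seen from the point of evaluation. -/
lemma norm_kernel_sub_le {ε : ℝ} (hε : ε ≤ 1 / 4) {ζ l m : ℂ} (hζ : ζ ≠ 0)
    (hl : ‖l - ζ‖ ≤ ε * ‖ζ‖) (hm : ‖m - ζ‖ ≤ ε * ‖ζ‖) :
    ‖(l * m ^ 2)⁻¹ + (l ^ 2 * m)⁻¹ - 2 / ζ ^ 3‖ ≤ 64 * ε / ‖ζ‖ ^ 3 := by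
  have hζn : 0 < ‖ζ‖ := norm_pos_iff.2 hζ
  obtain ⟨a, rfl⟩ : ∃ a, l = a * ζ := ⟨l / ζ, by field_simp⟩
  obtain ⟨b, rfl⟩ : ∃ b, m = b * ζ := ⟨m / ζ, by field_simp⟩
  have ha : ‖a - 1‖ ≤ ε := by
    rw [show a * ζ - ζ = (a - 1) * ζ by ring, norm_mul] at hl
    exact le_of_mul_le_mul_right hl hζn
  have hb : ‖b - 1‖ ≤ ε := by
    rw [show b * ζ - ζ = (b - 1) * ζ by ring, norm_mul] at hm
    exact le_of_mul_le_mul_right hm hζn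
  have bd : ∀ a : ℂ, ‖a - 1‖ ≤ ε → 3 / 4 ≤ ‖a‖ ∧ ‖a‖ ≤ 5 / 4 := by
    intro a ha
    have h1 := norm_sub_norm_le (1 : ℂ) a
    have h2 := norm_sub_norm_le a (1 : ℂ)
    rw [norm_sub_rev] at h1
    rw [norm_one] at h1 h2
    constructor <;> linarith
  obtain ⟨a1, a2⟩ := bd a ha
  obtain ⟨b1, b2⟩ := bd b hb
  have ha0 : a ≠ 0 := norm_pos_iff.1 (by linarith)
  have hb0 : b ≠ 0 := norm_pos_iff.1 (by linarith)
  have e : (a * ζ * (b * ζ) ^ 2)⁻¹ + ((a * ζ) ^ 2 * (b * ζ))⁻¹ - 2 / ζ ^ 3 =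
      ((a - 1) + (b - 1) - 2 * (((a - 1) * b + (b - 1)) * (a * b + 1))) / (a * b) ^ 2 / ζ ^ 3 := by
    field_simp
    ring
  rw [e, norm_div, norm_pow]
  gcongr
  rw [norm_div, norm_pow, norm_mul]
  have hab : 9 / 16 ≤ ‖a‖ * ‖b‖ := by nlinarith
  have hab2 : ‖a‖ * ‖b‖ ≤ 25 / 16 := by nlinarith
  have hε0 : 0 ≤ ε := (norm_nonneg _).trans ha
  rw [div_le_iff₀ (by positivity)]
  have n1 : ‖(a - 1) * b + (b - 1)‖ ≤ 9 / 4 * ε := by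
    refine (norm_add_le _ _).trans ?_
    rw [norm_mul]
    nlinarith [norm_nonneg b, norm_nonneg (a - 1)]
  have n2 : ‖a * b + 1‖ ≤ 41 / 16 := by
    refine (norm_add_le _ _).trans ?_
    rw [norm_mul, norm_one]
    linarith
  have n3 : ‖(a - 1) + (b - 1) - 2 * (((a - 1) * b + (b - 1)) * (a * b + 1))‖ ≤ 14 * ε := by
    refine (norm_sub_le _ _).trans ?_
    have h1 := norm_add_le (a - 1) (b - 1)
    have h2 : ‖(2 : ℂ) * (((a - 1) * b + (b - 1)) * (a * b + 1))‖ ≤ 2 * (9 / 4 * ε * (41 / 16)) := by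
      rw [norm_mul, norm_mul, Complex.norm_two]
      gcongr
    linarith
  have : (81 : ℝ) / 256 ≤ (‖a‖ * ‖b‖) ^ 2 := by nlinarith
  nlinarith

end

/-! ### Comparison of the Beurling transform with the flat model -/

section

/-- The derivative of the Beurling transform of the domain above the graph of `A`. -/
noncomputable def dB (A : ℝ → ℝ) (w : ℂ) : ℂ :=
  (Real.pi : ℂ)⁻¹ * ∫ x : ℝ, Complex.ofReal (deriv A x) /
    (Complex.ofReal x + Complex.ofReal (A x) * Complex.I - w) ^ 2

variable {A : ℝ → ℝ} {δ : ℝ}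

lemma ae_differentiableAt (hL : LipschitzWith (Real.toNNReal δ) A) :
    ∀ᵐ x, DifferentiableAt ℝ A x := hL.ae_differentiableAt

lemma abs_deriv_le (hδ : 0 ≤ δ) (hL : LipschitzWith (Real.toNNReal δ) A) (x : ℝ) :
    |deriv A x| ≤ δ := by
  have := norm_deriv_le_of_lipschitz hL (x₀ := x)
  rwa [Real.norm_eq_abs, Real.coe_toNNReal _ hδ] at this

/-- The graph parametrisation, seen from the point `x₀ + i (A x₀ + y)`. -/
noncomputable def gr (A : ℝ → ℝ) (x₀ y x : ℝ) : ℂ :=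
  (x : ℂ) + (A x : ℂ) * Complex.I - (⟨x₀, A x₀ + y⟩ : ℂ)

/-- The parametrisation, seen from the point `x₀ + i (A x₀ + y)`, of the line which replaces the
graph of `A` near `x₀` at scale `y`. -/
noncomputable def ln (A : ℝ → ℝ) (x₀ y x : ℝ) : ℂ :=
  (x : ℂ) + (jet A ⟨x₀, y⟩ x : ℂ) * Complex.I - (⟨x₀, A x₀ + y⟩ : ℂ)

lemma gr_sub (x₀ y x : ℝ) :
    gr A x₀ y x - ((x : ℂ) - ⟨x₀, y⟩) = ((A x - A x₀ : ℝ) : ℂ) * Complex.I := by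
  apply Complex.ext <;> simp [gr]
  ring

lemma ln_sub (x₀ y x : ℝ) :
    ln A x₀ y x - ((x : ℂ) - ⟨x₀, y⟩) = ((jet A ⟨x₀, y⟩ x - A x₀ : ℝ) : ℂ) * Complex.I := by
  apply Complex.ext <;> simp [ln]
  ring

/-- Seen from the point, the graph is within relative distance `O(δ)` of the horizontal line at
distance `y` below it. -/
lemma norm_gr_sub_le (hδ : 0 ≤ δ) (hL : LipschitzWith (Real.toNNReal δ) A) (x₀ y x : ℝ) :
    ‖gr A x₀ y x - ((x : ℂ) - ⟨x₀, y⟩)‖ ≤ δ * ‖(x : ℂ) - ⟨x₀, y⟩‖ := by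
  rw [gr_sub, norm_mul, Complex.norm_I, mul_one, Complex.norm_real, Real.norm_eq_abs]
  exact (abs_sub_le_of_lip hδ hL x x₀).trans (by gcongr; exact abs_le_norm_base x x₀ y)

lemma norm_ln_sub_le (hδ : 0 ≤ δ) (hL : LipschitzWith (Real.toNNReal δ) A)
    (hs : HasCompactSupport A) (x₀ : ℝ) {y : ℝ} (hy : 0 < y) (x : ℝ) :
    ‖ln A x₀ y x - ((x : ℂ) - ⟨x₀, y⟩)‖ ≤ 2 * δ * ‖(x : ℂ) - ⟨x₀, y⟩‖ := by
  rw [ln_sub, norm_mul, Complex.norm_I, mul_one, Complex.norm_real, Real.norm_eq_abs, jet_eq]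
  have h1 := abs_jet_base_sub_le hδ hL hs x₀ hy
  have h2 := abs_slp_le hδ hL hs x₀ hy
  have h3 : |slp A ⟨x₀, y⟩ * (x - x₀)| ≤ δ * ‖(x : ℂ) - ⟨x₀, y⟩‖ := by
    rw [abs_mul]
    exact mul_le_mul h2 (abs_le_norm_base x x₀ y) (abs_nonneg _) hδ
  have h4 : δ * y ≤ δ * ‖(x : ℂ) - ⟨x₀, y⟩‖ := by gcongr; exact le_norm_base x x₀ hy
  have h5 := abs_add_le (jet A ⟨x₀, y⟩ x₀ - A x₀) (slp A ⟨x₀, y⟩ * (x - x₀))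
  simp only [] at h5 ⊢
  rw [show jet A ⟨x₀, y⟩ x₀ + slp A ⟨x₀, y⟩ * (x - x₀) - A x₀ =
    jet A ⟨x₀, y⟩ x₀ - A x₀ + slp A ⟨x₀, y⟩ * (x - x₀) by ring]
  linarith

lemma le_norm_of_sub_le {u v : ℂ} {ε : ℝ} (hε : ε ≤ 1 / 4) (h : ‖u - v‖ ≤ ε * ‖v‖) :
    1 / 2 * ‖v‖ ≤ ‖u‖ := by
  have := norm_sub_norm_le v u
  rw [norm_sub_rev] at this
  nlinarith [norm_nonneg v]

lemma le_norm_gr (hδ : 0 ≤ δ) (hδ8 : δ ≤ 1 / 8) (hL : LipschitzWith (Real.toNNReal δ) A)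
    (x₀ y x : ℝ) : 1 / 2 * ‖(x : ℂ) - ⟨x₀, y⟩‖ ≤ ‖gr A x₀ y x‖ :=
  le_norm_of_sub_le (by linarith) (norm_gr_sub_le hδ hL x₀ y x)

lemma le_norm_ln (hδ : 0 ≤ δ) (hδ8 : δ ≤ 1 / 8) (hL : LipschitzWith (Real.toNNReal δ) A)
    (hs : HasCompactSupport A) (x₀ : ℝ) {y : ℝ} (hy : 0 < y) (x : ℝ) :
    1 / 2 * ‖(x : ℂ) - ⟨x₀, y⟩‖ ≤ ‖ln A x₀ y x‖ :=
  le_norm_of_sub_le (by linarith) (norm_ln_sub_le hδ hL hs x₀ hy x)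

lemma continuous_gr (hA : Continuous A) (x₀ y : ℝ) : Continuous (gr A x₀ y) := by
  unfold gr; fun_prop

lemma ln_eq (x₀ y x : ℝ) : ln A x₀ y x = (1 + slp A ⟨x₀, y⟩ * Complex.I) * x +
    ((jet A ⟨x₀, y⟩ x₀ - slp A ⟨x₀, y⟩ * x₀ : ℝ) * Complex.I - (⟨x₀, A x₀ + y⟩ : ℂ)) := by
  rw [ln, jet_eq]
  push_cast
  ring

lemma continuous_ln (x₀ y : ℝ) : Continuous (ln A x₀ y) := by
  simp only [funext (ln_eq (A := A) x₀ y)]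
  fun_prop

/-- Since the closed form `dγ / (γ - w)²` integrates to zero along the graph, the density `A'` can
be traded for a constant one. -/
lemma dB_eq (hδ : 0 ≤ δ) (hδ8 : δ ≤ 1 / 8) (hL : LipschitzWith (Real.toNNReal δ) A)
    (x₀ : ℝ) {y : ℝ} (hy : 0 < y) :
    dB A ⟨x₀, A x₀ + y⟩ = (Real.pi : ℂ)⁻¹ * (Complex.I * ∫ x, (gr A x₀ y x ^ 2)⁻¹) := by
  have hlow := le_norm_gr hδ hδ8 hL x₀ y
  have hc := continuous_gr hL.continuous x₀ y
  have hi := integrable_inv_pow hy (by norm_num : (0 : ℝ) < 1 / 2) hc hlow 0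
  simp only [zero_add] at hi
  have hg0 : ∀ x, gr A x₀ y x ≠ 0 := fun x => norm_pos_iff.1
    ((mul_pos (by norm_num) (norm_base_pos x x₀ hy)).trans_le (hlow x))
  have hi2 : Integrable (fun x => ((deriv A x : ℝ) : ℂ) * (gr A x₀ y x ^ 2)⁻¹) := by
    refine hi.bdd_mul (c := δ) ?_ ?_
    · exact (Complex.measurable_ofReal.comp (measurable_deriv A)).aestronglyMeasurable
    · refine Eventually.of_forall fun x => ?_
      rw [Complex.norm_real]
      exact abs_deriv_le hδ hL x
  have hz : ∫ x, ((gr A x₀ y x ^ 2)⁻¹ + Complex.I * (((deriv A x : ℝ) : ℂ) * (gr A x₀ y x ^ 2)⁻¹)) = 0 := by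
    have hinv : ∀ {l : Filter ℝ}, Tendsto (fun x : ℝ => |x|) l atTop →
        Tendsto (fun x => -(gr A x₀ y x)⁻¹) l (𝓝 0) := by
      intro l hl
      simpa using (tendsto_inv_zero (by norm_num : (0 : ℝ) < 1 / 2) hlow hl).neg
    refine integral_eq_zero_of_lipschitz (G := fun x => -(gr A x₀ y x)⁻¹)
      (C := Real.toNNReal (8 / y ^ 2)) ?_ ?_ (hi.add (hi2.const_mul _))
      (hinv tendsto_abs_atBot_atTop) (hinv tendsto_abs_atTop_atTop)
    · refine LipschitzWith.of_dist_le_mul fun u v => ?_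
      rw [Real.coe_toNNReal _ (by positivity), dist_eq_norm, Real.dist_eq]
      have e : -(gr A x₀ y u)⁻¹ - -(gr A x₀ y v)⁻¹ =
          (gr A x₀ y u - gr A x₀ y v) / (gr A x₀ y u * gr A x₀ y v) := by
        have := hg0 u
        have := hg0 v
        field_simp
        ring
      have h1 : ∀ x, y / 2 ≤ ‖gr A x₀ y x‖ := fun x => by
        have := hlow x
        have := le_norm_base x x₀ hy
        linarith
      have h2 : ‖gr A x₀ y u - gr A x₀ y v‖ ≤ 2 * |u - v| := by
        have e2 : gr A x₀ y u - gr A x₀ y v = ((u - v : ℝ) : ℂ) + ((A u - A v : ℝ) : ℂ) * Complex.I := by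
          simp only [gr]; push_cast; ring
        rw [e2]
        refine (norm_add_le _ _).trans ?_
        rw [norm_mul, Complex.norm_I, mul_one, Complex.norm_real, Complex.norm_real,
          Real.norm_eq_abs, Real.norm_eq_abs]
        have := abs_sub_le_of_lip hδ hL u v
        nlinarith [abs_nonneg (u - v)]
      rw [e, norm_div, norm_mul]
      calc ‖gr A x₀ y u - gr A x₀ y v‖ / (‖gr A x₀ y u‖ * ‖gr A x₀ y v‖)
          ≤ 2 * |u - v| / (y / 2 * (y / 2)) := by
            gcongr
            · exact h1 u
            · exact h1 v
        _ = 8 / y ^ 2 * |u - v| := by field_simp; ring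
    · filter_upwards [ae_differentiableAt hL] with x hx
      have h1 : HasDerivAt (gr A x₀ y) (1 + ((deriv A x : ℝ) : ℂ) * Complex.I) x := by
        have := (((Complex.ofRealCLM.hasDerivAt (x := x))).add
          ((hx.hasDerivAt.ofReal_comp).mul_const Complex.I)).sub_const (⟨x₀, A x₀ + y⟩ : ℂ)
        refine HasDerivAt.congr_deriv (f := gr A x₀ y) this ?_
        simp
      refine (h1.fun_inv (hg0 x)).fun_neg.congr_deriv ?_
      have := hg0 x
      field_simp
  rw [integral_add hi (hi2.const_mul _), integral_const_mul] at hz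
  have e : dB A ⟨x₀, A x₀ + y⟩ = (Real.pi : ℂ)⁻¹ * ∫ x, ((deriv A x : ℝ) : ℂ) * (gr A x₀ y x ^ 2)⁻¹ := rfl
  rw [e]
  congr 1
  linear_combination (-Complex.I) * hz +
    (∫ x, ((deriv A x : ℝ) : ℂ) * (gr A x₀ y x ^ 2)⁻¹) * Complex.I_sq

/-- Polynomials of degree one are invisible to the flat model. -/
lemma flat_eq (hA : Continuous A) (hs : HasCompactSupport A) (x₀ : ℝ) {y : ℝ} (hy : 0 < y) :
    Integrable (fun x : ℝ => ((A x - jet A ⟨x₀, y⟩ x : ℝ) : ℂ) * (((x : ℂ) - ⟨x₀, y⟩) ^ 3)⁻¹) ∧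
    flat A ⟨x₀, y⟩ = 2 / Real.pi *
      ∫ x : ℝ, ((A x - jet A ⟨x₀, y⟩ x : ℝ) : ℂ) * (((x : ℂ) - ⟨x₀, y⟩) ^ 3)⁻¹ := by
  have e : ∀ x : ℝ, (x : ℂ) - ⟨x₀, y⟩ = 1 * (x : ℂ) + (-⟨x₀, y⟩ : ℂ) := fun x => by ring
  have hlow : ∀ x : ℝ, 1 * ‖(x : ℂ) - ⟨x₀, y⟩‖ ≤ ‖1 * (x : ℂ) + (-⟨x₀, y⟩ : ℂ)‖ := fun x => by
    rw [one_mul, e]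
  have hi2 := integrable_inv_pow hy one_pos (by fun_prop) hlow 0
  have hi3 := integrable_inv_pow hy one_pos (by fun_prop) hlow 1
  have h2 := integral_inv_affine_pow hy one_pos one_ne_zero hlow 0
  have h3 := integral_inv_affine_pow hy one_pos one_ne_zero hlow 1
  simp only [← e, zero_add, Nat.reduceAdd] at hi2 hi3 h2 h3
  have hiA := integrable_cz hA hs 3 (z := (⟨x₀, y⟩ : ℂ)) hy
  set c : ℂ := (slp A ⟨x₀, y⟩ : ℂ)
  set d : ℂ := (jet A ⟨x₀, y⟩ x₀ : ℂ) + c * (y * Complex.I)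
  have hf : ∀ x : ℝ, ((A x - jet A ⟨x₀, y⟩ x : ℝ) : ℂ) * (((x : ℂ) - ⟨x₀, y⟩) ^ 3)⁻¹ =
      (A x : ℂ) / ((x : ℂ) - ⟨x₀, y⟩) ^ 3 - (c * (((x : ℂ) - ⟨x₀, y⟩) ^ 2)⁻¹ +
        d * (((x : ℂ) - ⟨x₀, y⟩) ^ 3)⁻¹) := by
    intro x
    have h0 := sub_ne_zero_of_im (z := (⟨x₀, y⟩ : ℂ)) hy x
    have hj : (jet A ⟨x₀, y⟩ x : ℂ) = c * ((x : ℂ) - ⟨x₀, y⟩) + d := by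
      rw [jet_eq]
      apply Complex.ext <;> simp [c, d]; ring
    rw [Complex.ofReal_sub, hj]
    field_simp
  simp only [hf]
  have hiS : Integrable (fun x : ℝ => c * (((x : ℂ) - ⟨x₀, y⟩) ^ 2)⁻¹ +
      d * (((x : ℂ) - ⟨x₀, y⟩) ^ 3)⁻¹) := (hi2.const_mul c).add (hi3.const_mul d)
  refine ⟨hiA.sub hiS, ?_⟩
  rw [integral_sub hiA hiS,
    integral_add (hi2.const_mul c) (hi3.const_mul d), integral_const_mul, integral_const_mul, h2, h3]
  simp [flat, cz]

/-- The derivative of the Beurling transform differs from its flat model by at most `δ` times an average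
of the deviation of `A` from its affine jet at scale `y`. -/
lemma enorm_dB_sub_flat_le (hδ : 0 ≤ δ) (hδ8 : δ ≤ 1 / 8)
    (hL : LipschitzWith (Real.toNNReal δ) A) (hs : HasCompactSupport A) (x₀ : ℝ) {y : ℝ}
    (hy : 0 < y) :
    ‖dB A ⟨x₀, A x₀ + y⟩ - flat A ⟨x₀, y⟩‖ₑ ≤
      ∫⁻ x : ℝ, ENNReal.ofReal (128 * δ / ‖(x : ℂ) - ⟨x₀, y⟩‖ ^ 3) * ‖A x - jet A ⟨x₀, y⟩ x‖ₑ := by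
  obtain ⟨hiE, hflat⟩ := flat_eq hL.continuous hs x₀ hy
  have hlowg := le_norm_gr hδ hδ8 hL x₀ y
  have hlowl := le_norm_ln hδ hδ8 hL hs x₀ hy
  have hg0 : ∀ x, gr A x₀ y x ≠ 0 := fun x => norm_pos_iff.1
    ((mul_pos (by norm_num) (norm_base_pos x x₀ hy)).trans_le (hlowg x))
  have hl0 : ∀ x, ln A x₀ y x ≠ 0 := fun x => norm_pos_iff.1
    ((mul_pos (by norm_num) (norm_base_pos x x₀ hy)).trans_le (hlowl x))
  have hig := integrable_inv_pow hy (by norm_num : (0 : ℝ) < 1 / 2)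
    (continuous_gr hL.continuous x₀ y) hlowg 0
  have hil := integrable_inv_pow hy (by norm_num : (0 : ℝ) < 1 / 2) (continuous_ln x₀ y) hlowl 0
  have hβ : (1 : ℂ) + slp A ⟨x₀, y⟩ * Complex.I ≠ 0 := by
    intro h
    have := congrArg Complex.re h
    simp at this
  have hzl := integral_inv_affine_pow hy (by norm_num : (0 : ℝ) < 1 / 2) hβ
    (fun x => by rw [← ln_eq]; exact hlowl x) 0
  simp only [← ln_eq, zero_add] at hig hil hzl
  -- the integral over the line vanishes, so it can be subtracted for free
  have e1 : dB A ⟨x₀, A x₀ + y⟩ = (Real.pi : ℂ)⁻¹ *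
      ∫ x, Complex.I * ((gr A x₀ y x ^ 2)⁻¹ - (ln A x₀ y x ^ 2)⁻¹) := by
    rw [dB_eq hδ hδ8 hL x₀ hy, integral_const_mul, integral_sub hig hil, hzl, sub_zero]
  have e2 : flat A ⟨x₀, y⟩ = (Real.pi : ℂ)⁻¹ *
      ∫ x : ℝ, 2 * (((A x - jet A ⟨x₀, y⟩ x : ℝ) : ℂ) * (((x : ℂ) - ⟨x₀, y⟩) ^ 3)⁻¹) := by
    rw [hflat, integral_const_mul]
    ring
  have hiD : Integrable (fun x => Complex.I * ((gr A x₀ y x ^ 2)⁻¹ - (ln A x₀ y x ^ 2)⁻¹)) :=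
    (hig.sub hil).const_mul _
  rw [e1, e2, ← mul_sub, ← integral_sub hiD (hiE.const_mul _), enorm_mul]
  have hpi : ‖(Real.pi : ℂ)⁻¹‖ₑ ≤ 1 := by
    rw [← enorm_one (G := ℝ), enorm_le_iff_norm_le, norm_inv, Complex.norm_real, Real.norm_eq_abs,
      abs_of_pos Real.pi_pos, norm_one]
    exact inv_le_one_of_one_le₀ (by linarith [Real.pi_gt_three])
  refine (mul_le_of_le_one_left' hpi).trans ((enorm_integral_le_lintegral_enorm _).trans ?_)
  refine lintegral_mono fun x => ?_
  have h0 := sub_ne_zero_of_im (z := (⟨x₀, y⟩ : ℂ)) hy x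
  have hE : gr A x₀ y x = ln A x₀ y x + ((A x - jet A ⟨x₀, y⟩ x : ℝ) : ℂ) * Complex.I := by
    simp only [gr, ln]; push_cast; ring
  -- both `l⁻² - g⁻²` and the flat term carry the factor `A - jet`; what is left of the kernels is a
  -- difference which is small because `g` and `l` are both close to `x - z`
  have key : Complex.I * ((gr A x₀ y x ^ 2)⁻¹ - (ln A x₀ y x ^ 2)⁻¹) -
      2 * (((A x - jet A ⟨x₀, y⟩ x : ℝ) : ℂ) * (((x : ℂ) - ⟨x₀, y⟩) ^ 3)⁻¹) =
      ((ln A x₀ y x * gr A x₀ y x ^ 2)⁻¹ + (ln A x₀ y x ^ 2 * gr A x₀ y x)⁻¹ -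
        2 / ((x : ℂ) - ⟨x₀, y⟩) ^ 3) * ((A x - jet A ⟨x₀, y⟩ x : ℝ) : ℂ) := by
    have hE2 : ((A x - jet A ⟨x₀, y⟩ x : ℝ) : ℂ) = -Complex.I * (gr A x₀ y x - ln A x₀ y x) := by
      rw [hE]
      linear_combination ((A x - jet A ⟨x₀, y⟩ x : ℝ) : ℂ) * Complex.I_sq
    rw [hE2]
    have := hg0 x
    have := hl0 x
    field_simp
    ring
  rw [key, enorm_mul]
  have hr : ‖((A x - jet A ⟨x₀, y⟩ x : ℝ) : ℂ)‖ₑ = ‖A x - jet A ⟨x₀, y⟩ x‖ₑ := by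
    rw [← ofReal_norm, ← ofReal_norm, Complex.norm_real]
  rw [hr]
  gcongr
  rw [← ofReal_norm]
  apply ENNReal.ofReal_le_ofReal
  have h1 := norm_gr_sub_le hδ hL x₀ y x
  have h2 := norm_ln_sub_le hδ hL hs x₀ hy x
  have := norm_kernel_sub_le (ε := 2 * δ) (by linarith) h0 h2
    (h1.trans (by have := norm_nonneg ((x : ℂ) - ⟨x₀, y⟩); nlinarith))
  refine this.trans (le_of_eq ?_)
  ring

end

/-! ### Finiteness of the flat model for truncated weights -/

section

variable {A : ℝ → ℝ} {δ : ℝ}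

lemma lintegral_comp_affine (g : ℝ → ℝ≥0∞) (x : ℝ) {y : ℝ} (hy : 0 < y) :
    ∫⁻ t, g t = ENNReal.ofReal y * ∫⁻ s, g (x + y * s) := by
  have h := (Homeomorph.mulLeft₀ y hy.ne').measurableEmbedding
  have h1 : ∫⁻ s, g (x + y * s) =
      ∫⁻ u, g (x + u) ∂(Measure.map (Homeomorph.mulLeft₀ y hy.ne') volume) := by
    rw [h.lintegral_map]; rfl
  rw [h1, Homeomorph.coe_mulLeft₀, Real.map_volume_mul_left hy.ne', lintegral_smul_measure, lintegral_add_left_eq_self, abs_of_pos (inv_pos.2 hy), smul_eq_mul,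
    ← mul_assoc, ← ENNReal.ofReal_mul hy.le, mul_inv_cancel₀ hy.ne', ENNReal.ofReal_one, one_mul]

lemma measurable_flat (hA : Continuous A) :
    Measurable (Function.uncurry fun x y : ℝ => ‖flat A ⟨x, y⟩‖ₑ) := by
  have hm : Measurable (fun q : ℝ × ℝ => (⟨q.1, q.2⟩ : ℂ)) :=
    Complex.measurableEquivRealProd.symm.measurable
  have h1 : Measurable (fun q : ℂ × ℝ => (A q.2 : ℂ) / ((q.2 : ℂ) - q.1) ^ 3) := by
    have := hA.measurable
    fun_prop
  have h2 : Measurable (cz A 3) := (h1.stronglyMeasurable.integral_prod_right').measurable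
  exact ((h2.comp hm).const_mul (2 / Real.pi : ℂ)).enorm

/-- The flat model does not see the constant `A x`. In rescaled coordinates it is bounded by an average
of increments of `A`, whose `L^p` norms are finite. -/
lemma enorm_flat_le (hA : Continuous A) (hs : HasCompactSupport A) (x : ℝ) {y : ℝ} (hy : 0 < y) :
    ‖flat A ⟨x, y⟩‖ₑ ≤ ∫⁻ s : ℝ, ENNReal.ofReal y *
      (ENNReal.ofReal ((‖((x + y * s : ℝ) : ℂ) - ⟨x, y⟩‖ ^ 3)⁻¹) * ‖A (x + y * s) - A x‖ₑ) := by
  have e : ∀ t : ℝ, (t : ℂ) - ⟨x, y⟩ = 1 * (t : ℂ) + (-⟨x, y⟩ : ℂ) := fun x => by ring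
  have hlow : ∀ t : ℝ, 1 * ‖(t : ℂ) - ⟨x, y⟩‖ ≤ ‖1 * (t : ℂ) + (-⟨x, y⟩ : ℂ)‖ := fun x => by
    rw [one_mul, e]
  have hi3 := integrable_inv_pow hy one_pos (by fun_prop) hlow 1
  have h3 := integral_inv_affine_pow hy one_pos one_ne_zero hlow 1
  simp only [← e, Nat.reduceAdd] at hi3 h3
  have hiA := integrable_cz hA hs 3 (z := (⟨x, y⟩ : ℂ)) hy
  have h4 : cz A 3 ⟨x, y⟩ =
      ∫ t : ℝ, ((A t : ℂ) / ((t : ℂ) - ⟨x, y⟩) ^ 3 - A x * (((t : ℂ) - ⟨x, y⟩) ^ 3)⁻¹) := by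
    rw [integral_sub hiA (hi3.const_mul _), integral_const_mul, h3, mul_zero, sub_zero, cz]
  rw [flat, enorm_mul]
  have hpi : ‖(2 / Real.pi : ℂ)‖ₑ ≤ 1 := by
    rw [← enorm_one (G := ℝ), enorm_le_iff_norm_le, norm_div, Complex.norm_real, Real.norm_eq_abs,
      abs_of_pos Real.pi_pos, norm_one, Complex.norm_two, div_le_one Real.pi_pos]
    linarith [Real.pi_gt_three]
  refine (mul_le_of_le_one_left' hpi).trans ?_
  rw [h4, lintegral_const_mul' _ _ ENNReal.ofReal_ne_top, ← lintegral_comp_affine (fun t =>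
    ENNReal.ofReal ((‖(t : ℂ) - ⟨x, y⟩‖ ^ 3)⁻¹) * ‖A t - A x‖ₑ) x hy]
  refine (enorm_integral_le_lintegral_enorm _).trans (lintegral_mono fun t => le_of_eq ?_)
  rw [div_eq_mul_inv, ← sub_mul, ← Complex.ofReal_sub, enorm_mul, mul_comm, ← norm_pow, ← norm_inv,
    ofReal_norm]
  congr 1
  rw [← ofReal_norm, ← ofReal_norm, Complex.norm_real]

/-- Each horizontal slice of the flat model has finite `L^p` norm, of size `O(1 / y)`. -/
lemma lintegral_flat_rpow_le {p : ℝ} (hp : 1 < p) (hδ : 0 < δ)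
    (hL : LipschitzWith (Real.toNNReal δ) A)
    (hs : HasCompactSupport A) : ∃ c : ℝ≥0∞, c ≠ ⊤ ∧ ∀ y : ℝ, 0 < y →
      ∫⁻ x : ℝ, ‖flat A ⟨x, y⟩‖ₑ ^ p ≤ ENNReal.ofReal y⁻¹ ^ p * c := by
  have hp0 : 0 < p := by linarith
  have hA := hL.continuous
  have hfin : ∫⁻ s : ℝ, ENNReal.ofReal (1 + s ^ 2)⁻¹ < ⊤ := by
    have := integrable_inv_one_add_sq.hasFiniteIntegral
    rwa [hasFiniteIntegral_iff_ofReal (Eventually.of_forall fun s => by positivity)] at this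
  set M := tsupport A with hM
  have hMm : MeasurableSet M := (isClosed_tsupport A).measurableSet
  have hMf : volume M < ⊤ := hs.isCompact.measure_lt_top
  refine ⟨ENNReal.ofReal δ ^ p * (∫⁻ s : ℝ, ENNReal.ofReal (1 + s ^ 2)⁻¹) ^ p *
    (2 * volume M), ?_, fun y hy => ?_⟩
  · refine ENNReal.mul_ne_top (ENNReal.mul_ne_top ?_ ?_) (ENNReal.mul_ne_top (by simp) hMf.ne)
    · exact ENNReal.rpow_ne_top_of_nonneg hp0.le ENNReal.ofReal_ne_top
    · exact ENNReal.rpow_ne_top_of_nonneg hp0.le hfin.ne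
  set F : ℝ → ℝ → ℝ≥0∞ := fun x s => ENNReal.ofReal y *
      (ENNReal.ofReal ((‖((x + y * s : ℝ) : ℂ) - ⟨x, y⟩‖ ^ 3)⁻¹) * ‖A (x + y * s) - A x‖ₑ) with hF
  have hm : Measurable (fun q : ℝ × ℝ => (⟨q.1, q.2⟩ : ℂ)) :=
    Complex.measurableEquivRealProd.symm.measurable
  have hFm : Measurable (Function.uncurry F) := by
    have := hA.measurable
    have h2 : Measurable (fun q : ℝ × ℝ => (⟨q.1, y⟩ : ℂ)) :=
      hm.comp (measurable_fst.prodMk measurable_const)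
    simp only [hF, Function.uncurry_def]
    fun_prop
  have hFb : ∀ x s, F x s ≤ ENNReal.ofReal (δ * y⁻¹ * (1 + s ^ 2)⁻¹) *
      (M ∪ (fun x => x + y * s) ⁻¹' M).indicator 1 x := by
    intro x s
    by_cases hx : x ∈ M ∪ (fun x => x + y * s) ⁻¹' M
    · rw [indicator_of_mem hx, Pi.one_apply, mul_one]
      simp only [hF]
      rw [← ofReal_norm, ← ENNReal.ofReal_mul (by positivity), ← ENNReal.ofReal_mul (by positivity)]
      apply ENNReal.ofReal_le_ofReal
      have h1 := abs_sub_le_of_lip hδ.le hL (x + y * s) x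
      have h2 := abs_le_norm_base (x + y * s) x y
      have h3 := norm_sq_base (x + y * s) x y
      have h4 := norm_base_pos (x + y * s) x hy
      rw [Real.norm_eq_abs]
      set n := ‖((x + y * s : ℝ) : ℂ) - ⟨x, y⟩‖
      have h5 : |A (x + y * s) - A x| ≤ δ * n := h1.trans (by gcongr)
      have h6 : n ^ 2 = y ^ 2 * (1 + s ^ 2) := by rw [h3]; ring
      calc y * ((n ^ 3)⁻¹ * |A (x + y * s) - A x|) ≤ y * ((n ^ 3)⁻¹ * (δ * n)) := by gcongr
        _ = y * δ * (n ^ 2)⁻¹ := by field_simp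
        _ = _ := by rw [h6]; field_simp
    · have h1 : A x = 0 := image_eq_zero_of_notMem_tsupport fun h => hx (Or.inl h)
      have h2 : A (x + y * s) = 0 := image_eq_zero_of_notMem_tsupport fun h => hx (Or.inr h)
      simp [hF, h1, h2]
  calc ∫⁻ x : ℝ, ‖flat A ⟨x, y⟩‖ₑ ^ p ≤ ∫⁻ x : ℝ, (∫⁻ s, F x s) ^ p :=
        lintegral_mono fun x => ENNReal.rpow_le_rpow (enorm_flat_le hA hs x hy) hp0.le
    _ ≤ (∫⁻ s : ℝ, ENNReal.ofReal (δ * y⁻¹ * (1 + s ^ 2)⁻¹)) ^ p * (2 * volume M) := by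
        refine lintegral_lintegral_rpow_le hp hFm (by fun_prop)
          (Eventually.of_forall fun s => (ENNReal.ofReal_pos.2 (by positivity)).ne')
          (Eventually.of_forall fun s => ENNReal.ofReal_ne_top)
          (Eventually.of_forall fun s => ?_)
        have hpre : MeasurableSet ((fun x => x + y * s) ⁻¹' M) :=
          hMm.preimage (by fun_prop)
        calc ∫⁻ x, F x s ^ p ≤ ∫⁻ x, ENNReal.ofReal (δ * y⁻¹ * (1 + s ^ 2)⁻¹) ^ p *
              (M ∪ (fun x => x + y * s) ⁻¹' M).indicator 1 x := by
              refine lintegral_mono fun x => (ENNReal.rpow_le_rpow (hFb x s) hp0.le).trans ?_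
              rw [ENNReal.mul_rpow_of_nonneg _ _ hp0.le]
              gcongr
              by_cases hx : x ∈ M ∪ (fun x => x + y * s) ⁻¹' M
              · simp [indicator_of_mem hx]
              · simp [indicator_of_notMem hx, hp0]
          _ = ENNReal.ofReal (δ * y⁻¹ * (1 + s ^ 2)⁻¹) ^ p *
              volume (M ∪ (fun x => x + y * s) ⁻¹' M) := by
              rw [lintegral_const_mul' _ _ (ENNReal.rpow_ne_top_of_nonneg hp0.le
                ENNReal.ofReal_ne_top), lintegral_indicator_one (hMm.union hpre)]
          _ ≤ _ := by
              gcongr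
              refine (measure_union_le _ _).trans ?_
              rw [measure_preimage_add_right, two_mul]
    _ = _ := by
        have : ∀ s : ℝ, ENNReal.ofReal (δ * y⁻¹ * (1 + s ^ 2)⁻¹) =
            ENNReal.ofReal (δ * y⁻¹) * ENNReal.ofReal (1 + s ^ 2)⁻¹ := fun s =>
          ENNReal.ofReal_mul (by positivity)
        simp_rw [this]
        rw [lintegral_const_mul' _ _ ENNReal.ofReal_ne_top, ENNReal.mul_rpow_of_nonneg _ _ hp0.le,
          ENNReal.ofReal_mul hδ.le, ENNReal.mul_rpow_of_nonneg _ _ hp0.le]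
        ring

lemma wNorm_eq {p : ℝ} (hp : 0 ≤ p) (ρ : ℝ → ℝ≥0∞) {f : ℝ → ℝ → ℝ≥0∞}
    (hf : Measurable (Function.uncurry f)) :
    wNorm p ρ f = ∫⁻ y in Ioi (0 : ℝ), ρ y ^ p * ∫⁻ x : ℝ, f x y ^ p := by
  refine lintegral_congr fun y => ?_
  have : Measurable fun x => f x y ^ p :=
    (hf.comp (measurable_id.prodMk measurable_const)).pow_const p
  rw [← lintegral_const_mul _ this]
  exact lintegral_congr fun x => ENNReal.mul_rpow_of_nonneg _ _ hp

lemma wNorm_add_le {p : ℝ} (hp : 1 < p) {ρ : ℝ → ℝ≥0∞} (hρ : Measurable ρ)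
    {f g : ℝ → ℝ → ℝ≥0∞} (hf : Measurable (Function.uncurry f)) :
    wNorm p ρ (fun x y => f x y + g x y) ≤ 2 ^ p * (wNorm p ρ f + wNorm p ρ g) := by
  have hm : Measurable (Function.uncurry fun y x => (ρ y * f x y) ^ p) :=
    ((hρ.comp measurable_fst).mul (hf.comp measurable_swap)).pow_const p
  have h1 : ∀ y, ∫⁻ x, (ρ y * (f x y + g x y)) ^ p ≤
      2 ^ p * ((∫⁻ x, (ρ y * f x y) ^ p) + ∫⁻ x, (ρ y * g x y) ^ p) := by
    intro y
    have hmy : Measurable fun x => (ρ y * f x y) ^ p :=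
      hm.comp (measurable_const.prodMk measurable_id)
    rw [← lintegral_add_left hmy,
      ← lintegral_const_mul' _ _ (by simp)]
    refine lintegral_mono fun x => ?_
    rw [mul_add]
    refine (ENNReal.rpow_add_le_mul_rpow_add_rpow _ _ hp.le).trans ?_
    gcongr
    · norm_num
    · linarith
  unfold wNorm
  have hm2 : Measurable fun y => ∫⁻ x, (ρ y * f x y) ^ p := hm.lintegral_prod_right'
  rw [← lintegral_add_left hm2,
    ← lintegral_const_mul' _ _ (by simp)]
  exact lintegral_mono fun y => h1 y

lemma wNorm_mono {p : ℝ} (hp : 0 ≤ p) {ρ ρ' : ℝ → ℝ≥0∞} {f g : ℝ → ℝ → ℝ≥0∞}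
    (hρ : ∀ y, 0 < y → ρ y ≤ ρ' y) (h : ∀ x y, 0 < y → f x y ≤ g x y) :
    wNorm p ρ f ≤ wNorm p ρ' g :=
  setLIntegral_mono' measurableSet_Ioi fun y hy => lintegral_mono fun x =>
    ENNReal.rpow_le_rpow (mul_le_mul' (hρ y hy) (h x y hy)) hp

/-- The truncated weight `y / (y + ε) ^ α`, increasing to `y ^ (1 - α)` as `ε` tends to zero. -/
noncomputable def wt (α ε y : ℝ) : ℝ≥0∞ := ENNReal.ofReal (y / (y + ε) ^ α)

lemma measurable_wt (α ε : ℝ) : Measurable (wt α ε) := by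
  unfold wt; fun_prop

lemma wt_le_zero {α ε y : ℝ} (hα : 0 ≤ α) (hε : 0 ≤ ε) (hy : 0 < y) :
    wt α ε y ≤ wt α 0 y := by
  unfold wt
  apply ENNReal.ofReal_le_ofReal
  rw [add_zero]
  gcongr
  linarith

/-- The a priori finiteness needed for absorption. The truncated weight turns the bound `O(1 / y)` for
the slices into `(y + ε) ^ (-α)`, whose `p`-th power is integrable because `α p > 1`. -/
lemma wNorm_flat_lt_top {α p ε : ℝ} (hp : 1 < p) (hαp : 1 < α * p) (hε : 0 < ε)
    (hδ : 0 < δ) (hL : LipschitzWith (Real.toNNReal δ) A) (hs : HasCompactSupport A) :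
    wNorm p (wt α ε) (fun x y => ‖flat A ⟨x, y⟩‖ₑ) < ⊤ := by
  have hp0 : 0 < p := by linarith
  obtain ⟨c, hc, h⟩ := lintegral_flat_rpow_le hp hδ hL hs
  rw [wNorm_eq hp0.le _ (measurable_flat hL.continuous)]
  have h1 : ∀ y ∈ Ioi (0 : ℝ), wt α ε y ^ p * ∫⁻ x : ℝ, ‖flat A ⟨x, y⟩‖ₑ ^ p ≤
      ENNReal.ofReal ((y + ε) ^ (-(α * p))) * c := by
    intro y hy
    have hy : 0 < y := hy
    refine (mul_le_mul_right (h y hy) _).trans (le_of_eq ?_)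
    rw [← mul_assoc, wt, ← ENNReal.mul_rpow_of_nonneg _ _ hp0.le,
      ← ENNReal.ofReal_mul (by positivity), ENNReal.ofReal_rpow_of_nonneg (by positivity) hp0.le]
    congr 2
    rw [show y / (y + ε) ^ α * y⁻¹ = (y + ε) ^ (-α) by
      rw [Real.rpow_neg (by positivity)]; field_simp, ← Real.rpow_mul (by positivity), neg_mul]
  refine (setLIntegral_mono' measurableSet_Ioi h1).trans_lt ?_
  rw [lintegral_mul_const' _ _ hc]
  refine ENNReal.mul_lt_top ?_ hc.lt_top
  have hi : IntegrableOn (fun y : ℝ => (y + ε) ^ (-(α * p))) (Ioi 0) :=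
    integrableOn_add_rpow_Ioi_of_lt (by linarith) (by linarith)
  have := hi.hasFiniteIntegral
  rwa [hasFiniteIntegral_iff_ofReal] at this
  refine (ae_restrict_iff' measurableSet_Ioi).2 (Eventually.of_forall fun y hy => ?_)
  have : 0 < y := hy
  positivity

end

/-! ### The comparison in rescaled coordinates -/

section

variable {A : ℝ → ℝ} {δ : ℝ}

/-- In the coordinates `(τ, s)`, rescaled by the height, the heights `s` between `a` and the top
`1 + |τ|` of the Taylor path. -/
def reg (a : ℝ) : Set (ℝ × ℝ) := {q | a < q.2 ∧ q.2 < 1 + |q.1|}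

lemma measurableSet_reg (a : ℝ) : MeasurableSet (reg a) :=
  (measurableSet_lt measurable_const measurable_snd).inter
    (measurableSet_lt measurable_snd (by fun_prop))

lemma lintegral_reg (a : ℝ) {H : ℝ × ℝ → ℝ≥0∞} (hH : Measurable H) :
    ∫⁻ q in reg a, H q = ∫⁻ τ : ℝ, ∫⁻ s in Ioo a (1 + |τ|), H (τ, s) := by
  rw [← lintegral_indicator (measurableSet_reg a), Measure.volume_eq_prod,
    lintegral_prod _ (hH.indicator (measurableSet_reg a)).aemeasurable]
  refine lintegral_congr fun τ => ?_
  rw [← lintegral_indicator measurableSet_Ioo]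
  rfl

lemma measurable_reg (a : ℝ) {H : ℝ × ℝ → ℝ≥0∞} (hH : Measurable H) :
    Measurable fun τ : ℝ => ∫⁻ s in Ioo a (1 + |τ|), H (τ, s) := by
  have h : Measurable fun τ : ℝ => ∫⁻ s, (reg a).indicator H (τ, s) :=
    (hH.indicator (measurableSet_reg a)).lintegral_prod_right'
  convert h using 2 with τ
  rw [← lintegral_indicator measurableSet_Ioo]
  rfl

lemma lintegral_Ioo_scale (g : ℝ → ℝ≥0∞) (a b : ℝ) {y : ℝ} (hy : 0 < y) :
    ∫⁻ η in Ioo (y * a) (y * b), g η = ENNReal.ofReal y * ∫⁻ s in Ioo a b, g (y * s) := by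
  rw [← lintegral_indicator measurableSet_Ioo, ← lintegral_indicator measurableSet_Ioo,
    lintegral_comp_affine _ 0 hy]
  congr 1
  refine lintegral_congr fun s => ?_
  simp only [zero_add, indicator, mem_Ioo, mul_lt_mul_iff_right₀ hy]

lemma measurable_operator {S : Type*} [MeasurableSpace S] {ν : Measure S} [SFinite ν]
    {f : ℝ → ℝ → ℝ≥0∞} (hf : Measurable (Function.uncurry f)) {k : S → ℝ≥0∞} {θ s : S → ℝ}
    (hk : Measurable k) (hθ : Measurable θ) (hsm : Measurable s) :
    Measurable (Function.uncurry fun x y => ∫⁻ σ, k σ * f (x + y * θ σ) (y * s σ) ∂ν) := by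
  have hfm : Measurable (fun w : (ℝ × ℝ) × S => f (w.1.1 + w.1.2 * θ w.2) (w.1.2 * s w.2)) := by
    have : Measurable (fun w : (ℝ × ℝ) × S => (w.1.1 + w.1.2 * θ w.2, w.1.2 * s w.2)) := by
      fun_prop
    exact hf.comp this
  have : Measurable (fun w : (ℝ × ℝ) × S =>
      k w.2 * f (w.1.1 + w.1.2 * θ w.2) (w.1.2 * s w.2)) := by fun_prop
  exact this.lintegral_prod_right'

/-- The comparison estimate in rescaled coordinates: the deviation of the derivative of the Beurling
transform from the flat model is at most `δ` times two averages of dilates and translates of the flat model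
itself. -/
lemma enorm_dB_sub_flat_le_operator (hδ : 0 ≤ δ) (hδ8 : δ ≤ 1 / 8)
    (hL : LipschitzWith (Real.toNNReal δ) A) (hs : HasCompactSupport A) (x₀ : ℝ) {y : ℝ}
    (hy : 0 < y) :
    ‖dB A ⟨x₀, A x₀ + y⟩ - flat A ⟨x₀, y⟩‖ₑ ≤
      ENNReal.ofReal (2048 * δ) *
        ((∫⁻ q in reg 1, ENNReal.ofReal ((1 + |q.1|) ^ 2)⁻¹ * ‖flat A ⟨x₀ + y * 0, y * q.2⟩‖ₑ) +
        ∫⁻ q in reg 0, ENNReal.ofReal (q.2 / (1 + |q.1|) ^ 3) *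
          ‖flat A ⟨x₀ + y * (q.1 * (1 - q.2 / (1 + |q.1|))), y * q.2⟩‖ₑ) := by
  have hf := measurable_flat hL.continuous
  have hm1 : Measurable fun q : ℝ × ℝ =>
      ENNReal.ofReal ((1 + |q.1|) ^ 2)⁻¹ * ‖flat A ⟨x₀ + y * 0, y * q.2⟩‖ₑ := by
    have : Measurable fun q : ℝ × ℝ => (x₀ + y * 0, y * q.2) := by fun_prop
    exact Measurable.mul (by fun_prop) (hf.comp this)
  have hm2 : Measurable fun q : ℝ × ℝ => ENNReal.ofReal (q.2 / (1 + |q.1|) ^ 3) *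
      ‖flat A ⟨x₀ + y * (q.1 * (1 - q.2 / (1 + |q.1|))), y * q.2⟩‖ₑ := by
    have : Measurable fun q : ℝ × ℝ => (x₀ + y * (q.1 * (1 - q.2 / (1 + |q.1|))), y * q.2) := by
      fun_prop
    exact Measurable.mul (by fun_prop) (hf.comp this)
  rw [lintegral_reg 1 hm1, lintegral_reg 0 hm2, ← lintegral_add_left (measurable_reg 1 hm1),
    ← lintegral_const_mul' _ _ ENNReal.ofReal_ne_top]
  refine (enorm_dB_sub_flat_le hδ hδ8 hL hs x₀ hy).trans ?_
  rw [lintegral_comp_affine _ x₀ hy, ← lintegral_const_mul' _ _ ENNReal.ofReal_ne_top]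
  refine lintegral_mono fun τ => ?_
  have hS : 0 < 1 + |τ| := by positivity
  have hT : y + |y * τ| = y * (1 + |τ|) := by rw [abs_mul, abs_of_pos hy]; ring
  have hjet := enorm_sub_jet_le hδ hL hs x₀ (y * τ) hy
  rw [hT] at hjet
  have i1 := lintegral_Ioo_scale (fun η => ENNReal.ofReal (2 * (y * (1 + |τ|))) *
    ‖flat A ⟨x₀, η⟩‖ₑ) 1 (1 + |τ|) hy
  have i2 := lintegral_Ioo_scale (fun η => ENNReal.ofReal (2 * η) *
    ‖flat A ⟨x₀ + y * τ * (1 - η / (y * (1 + |τ|))), η⟩‖ₑ) 0 (1 + |τ|) hy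
  rw [mul_one] at i1
  rw [mul_zero] at i2
  rw [i1, i2] at hjet
  have hn : y * (1 + |τ|) / 2 ≤ ‖((x₀ + y * τ : ℝ) : ℂ) - ⟨x₀, y⟩‖ := by
    have h1 := abs_le_norm_base (x₀ + y * τ) x₀ y
    have h2 := le_norm_base (x₀ + y * τ) x₀ hy
    rw [add_sub_cancel_left, abs_mul, abs_of_pos hy] at h1
    linarith
  have hk : 128 * δ / ‖((x₀ + y * τ : ℝ) : ℂ) - ⟨x₀, y⟩‖ ^ 3 ≤
      1024 * δ / (y * (1 + |τ|)) ^ 3 := by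
    calc _ ≤ 128 * δ / (y * (1 + |τ|) / 2) ^ 3 := by gcongr
      _ = _ := by field_simp; ring
  refine (mul_le_mul_right (mul_le_mul' (ENNReal.ofReal_le_ofReal hk) hjet) _).trans ?_
  rw [mul_add (ENNReal.ofReal (1024 * δ / _)), mul_add (ENNReal.ofReal y),
    mul_add (ENNReal.ofReal (2048 * δ))]
  refine add_le_add (le_of_eq ?_) (le_of_eq ?_)
  · rw [← mul_assoc, ← mul_assoc, ← ENNReal.ofReal_mul (by positivity),
      ← ENNReal.ofReal_mul (by positivity), ← lintegral_const_mul' _ _ ENNReal.ofReal_ne_top,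
      ← lintegral_const_mul' _ _ ENNReal.ofReal_ne_top]
    refine lintegral_congr fun s => ?_
    rw [← mul_assoc, ← ENNReal.ofReal_mul (by positivity),
      ← mul_assoc (ENNReal.ofReal (2048 * δ)),
      ← ENNReal.ofReal_mul (by positivity : 0 ≤ 2048 * δ), mul_zero, add_zero]
    congr 2
    field_simp
    ring
  · rw [← mul_assoc, ← mul_assoc, ← ENNReal.ofReal_mul (by positivity),
      ← ENNReal.ofReal_mul (by positivity), ← lintegral_const_mul' _ _ ENNReal.ofReal_ne_top,
      ← lintegral_const_mul' _ _ ENNReal.ofReal_ne_top]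
    refine lintegral_congr fun s => ?_
    rw [← mul_assoc, ← ENNReal.ofReal_mul (by positivity),
      ← mul_assoc (ENNReal.ofReal (2048 * δ)),
      ← ENNReal.ofReal_mul (by positivity : 0 ≤ 2048 * δ)]
    congr 2
    · field_simp
      ring
    · congr 3
      field_simp

/-- Local integrability in height and decay in the horizontal variable of the homogeneous
kernels. -/
lemma lintegral_reg_lt_top {a q : ℝ} (ha : -1 < a) (hq : q + (a + 1) < -1) :
    ∫⁻ z in reg 0, ENNReal.ofReal ((1 + |z.1|) ^ q * z.2 ^ a) < ⊤ := by
  rw [lintegral_reg 0 (by fun_prop)]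
  have h : ∀ τ : ℝ, ∫⁻ s in Ioo 0 (1 + |τ|), ENNReal.ofReal ((1 + |τ|) ^ q * s ^ a) =
      ENNReal.ofReal ((a + 1)⁻¹ * (1 + ‖τ‖) ^ (-(-(q + (a + 1))))) := by
    intro τ
    have hS : 0 < 1 + |τ| := by positivity
    have hi : IntegrableOn (fun s : ℝ => s ^ a) (Ioo 0 (1 + |τ|)) :=
      (intervalIntegral.integrableOn_Ioo_rpow_iff hS).2 ha
    rw [← ofReal_integral_eq_lintegral_ofReal (hi.const_mul _)
      ((ae_restrict_iff' measurableSet_Ioo).2 (Eventually.of_forall fun s hs => by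
        have := hs.1
        positivity)), integral_const_mul, ← integral_Ioc_eq_integral_Ioo,
      ← intervalIntegral.integral_of_le hS.le, integral_rpow (Or.inl ha),
      Real.zero_rpow (by linarith), sub_zero, neg_neg, Real.norm_eq_abs]
    rw [Real.rpow_add hS q (a + 1)]
    congr 1
    ring
  simp_rw [h]
  have hi : Integrable (fun τ : ℝ => (a + 1)⁻¹ * (1 + ‖τ‖) ^ (-(-(q + (a + 1))))) :=
    (integrable_one_add_norm (by simp; linarith)).const_mul _
  have := hi.hasFiniteIntegral
  rwa [hasFiniteIntegral_iff_ofReal] at this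
  refine Eventually.of_forall fun τ => ?_
  have : 0 < a + 1 := by linarith
  positivity

end

/-! ### Absorption -/

section

variable {A : ℝ → ℝ} {δ : ℝ}

/-- Approximate homogeneity of the truncated weights, with a constant independent of `ε`. -/
lemma wt_scale {α ε y s : ℝ} (hα : 0 ≤ α) (hε : 0 ≤ ε) (hy : 0 < y) (hs : 0 < s) :
    wt α ε y ≤ ENNReal.ofReal (s⁻¹ + s ^ (α - 1)) * wt α ε (y * s) := by
  unfold wt
  rw [← ENNReal.ofReal_mul (by positivity)]
  apply ENNReal.ofReal_le_ofReal
  have h1 : (y * s + ε) ^ α ≤ (1 + s ^ α) * (y + ε) ^ α := by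
    rcases le_total s 1 with h | h
    · calc (y * s + ε) ^ α ≤ (y + ε) ^ α := by
            apply Real.rpow_le_rpow (by positivity) _ hα
            nlinarith
        _ ≤ _ := le_mul_of_one_le_left (by positivity) (by
            have : 0 ≤ s ^ α := by positivity
            linarith)
    · calc (y * s + ε) ^ α ≤ (s * (y + ε)) ^ α := by
            apply Real.rpow_le_rpow (by positivity) _ hα
            nlinarith
        _ = s ^ α * (y + ε) ^ α := Real.mul_rpow hs.le (by positivity)
        _ ≤ _ := by gcongr; linarith
  have h2 : (s⁻¹ + s ^ (α - 1)) * (y * s / (y * s + ε) ^ α) =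
      y * (1 + s ^ α) / (y * s + ε) ^ α := by
    rw [Real.rpow_sub_one hs.ne']; field_simp
  rw [h2, div_le_div_iff₀ (by positivity) (by positivity)]
  nlinarith

/-- Finiteness of the operator constant in `wNorm_operator` for the vertical part of the Taylor path,
along which the heights exceed `1`. -/
lemma lintegral_k1_lt_top {α p : ℝ} (hp : 1 < p) (hαp : 1 < α * p) (hα1 : α < 1) :
    ∫⁻ q in reg 1, ENNReal.ofReal ((1 + |q.1|) ^ 2)⁻¹ *
      (ENNReal.ofReal (q.2⁻¹ + q.2 ^ (α - 1)) * ENNReal.ofReal (q.2 ^ (-(1 / p)))) < ⊤ := by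
  have hp0 : 0 < p := by linarith
  have h1 : 1 / p < α := by rw [div_lt_iff₀ hp0]; exact hαp
  have h1' : 0 < 1 / p := by positivity
  have hr := lintegral_reg_lt_top (a := α - 1 / p - 1) (q := -2) (by linarith) (by linarith)
  refine lt_of_le_of_lt ?_ (ENNReal.mul_lt_top (ENNReal.ofReal_lt_top (r := 2)) hr)
  rw [← lintegral_const_mul' _ _ ENNReal.ofReal_ne_top]
  refine (setLIntegral_mono' (measurableSet_reg 1) ?_).trans
    (lintegral_mono_set fun q hq => ⟨lt_trans one_pos hq.1, hq.2⟩)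
  intro q hq
  have hq1 : 1 < q.2 := hq.1
  have hq0 : 0 < q.2 := by linarith
  have hS : 0 < 1 + |q.1| := by positivity
  rw [← ENNReal.ofReal_mul (by positivity), ← ENNReal.ofReal_mul (by positivity),
    ← ENNReal.ofReal_mul (by positivity)]
  apply ENNReal.ofReal_le_ofReal
  have h2 : q.2⁻¹ ≤ q.2 ^ (α - 1) := by
    rw [← Real.rpow_neg_one]
    exact Real.rpow_le_rpow_of_exponent_le hq1.le (by linarith)
  have h3 : q.2 ^ (α - 1 / p - 1) = q.2 ^ (α - 1) * q.2 ^ (-(1 / p)) := by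
    rw [← Real.rpow_add hq0]; congr 1; ring
  have h4 : (1 + |q.1|) ^ (-2 : ℝ) = ((1 + |q.1|) ^ 2)⁻¹ := by
    rw [Real.rpow_neg hS.le]; norm_cast
  rw [h3, h4]
  calc _ ≤ ((1 + |q.1|) ^ 2)⁻¹ * ((q.2 ^ (α - 1) + q.2 ^ (α - 1)) * q.2 ^ (-(1 / p))) := by gcongr
    _ = _ := by ring

/-- Finiteness of the operator constant in `wNorm_operator` for the part of the Taylor path that goes
down to the boundary. -/
lemma lintegral_k2_lt_top {α p : ℝ} (hp : 1 < p) (hαp : 1 < α * p) (hα1 : α < 1) :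
    ∫⁻ q in reg 0, ENNReal.ofReal (q.2 / (1 + |q.1|) ^ 3) *
      (ENNReal.ofReal (q.2⁻¹ + q.2 ^ (α - 1)) * ENNReal.ofReal (q.2 ^ (-(1 / p)))) < ⊤ := by
  have hp0 : 0 < p := by linarith
  have h1 : 1 / p < α := by rw [div_lt_iff₀ hp0]; exact hαp
  have h1' : 0 < 1 / p := by positivity
  have h1'' : 1 / p < 1 := by linarith
  have hr1 := lintegral_reg_lt_top (a := -(1 / p)) (q := -3) (by linarith) (by linarith)
  have hr2 := lintegral_reg_lt_top (a := α - 1 / p) (q := -3) (by linarith) (by linarith)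
  refine lt_of_le_of_lt ?_ (ENNReal.add_lt_top.2 ⟨hr1, hr2⟩)
  have hm : Measurable fun z : ℝ × ℝ => ENNReal.ofReal ((1 + |z.1|) ^ (-3 : ℝ) * z.2 ^ (-(1 / p))) :=
    by fun_prop
  rw [← lintegral_add_left hm]
  refine (setLIntegral_mono' (measurableSet_reg 0) ?_)
  intro q hq
  have hq0 : 0 < q.2 := hq.1
  have hS : 0 < 1 + |q.1| := by positivity
  rw [← ENNReal.ofReal_mul (by positivity), ← ENNReal.ofReal_mul (by positivity),
    ← ENNReal.ofReal_add (by positivity) (by positivity)]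
  apply ENNReal.ofReal_le_ofReal
  have h3 : q.2 ^ (α - 1 / p) = q.2 ^ α * q.2 ^ (-(1 / p)) := by
    rw [← Real.rpow_add hq0]; congr 1
  have h4 : (1 + |q.1|) ^ (-3 : ℝ) = ((1 + |q.1|) ^ 3)⁻¹ := by
    rw [Real.rpow_neg hS.le]; norm_cast
  rw [h3, h4, Real.rpow_sub_one hq0.ne']
  refine le_of_eq ?_
  field_simp

lemma wNorm_const_mul {p : ℝ} (hp : 0 ≤ p) (ρ : ℝ → ℝ≥0∞) (f : ℝ → ℝ → ℝ≥0∞) {c : ℝ≥0∞}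
    (hc : c ≠ ⊤) : wNorm p ρ (fun x y => c * f x y) = c ^ p * wNorm p ρ f := by
  unfold wNorm
  have hcp : c ^ p ≠ ⊤ := ENNReal.rpow_ne_top_of_nonneg hp hc
  rw [← lintegral_const_mul' _ _ hcp]
  refine lintegral_congr fun y => ?_
  rw [← lintegral_const_mul' _ _ hcp]
  refine lintegral_congr fun x => ?_
  rw [← ENNReal.mul_rpow_of_nonneg _ _ hp]
  congr 1
  ring

/-- Passage to the limit `ε → 0` in the weights. -/
lemma wNorm_zero_le {α p : ℝ} (hα : 0 ≤ α) (hp : 0 ≤ p) {f : ℝ → ℝ → ℝ≥0∞}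
    (hf : Measurable (Function.uncurry f)) {M : ℝ≥0∞}
    (h : ∀ ε, 0 < ε → wNorm p (wt α ε) f ≤ M) : wNorm p (wt α 0) f ≤ M := by
  have hG : Measurable fun y => ∫⁻ x : ℝ, f x y ^ p :=
    Measurable.lintegral_prod_left' (f := fun q : ℝ × ℝ => f q.1 q.2 ^ p) (hf.pow_const p)
  let E : ℕ → ℝ → ℝ≥0∞ := fun n y => wt α (1 / ((n : ℝ) + 1)) y ^ p * ∫⁻ x : ℝ, f x y ^ p
  have hE : ∀ n, Measurable (E n) := fun n => ((measurable_wt α _).pow_const p).mul hG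
  have hlim : ∀ y ∈ Ioi (0 : ℝ), wt α 0 y ^ p * ∫⁻ x : ℝ, f x y ^ p =
      liminf (fun n => E n y) atTop := by
    intro y hy
    have hy : 0 < y := hy
    refine (Tendsto.liminf_eq ?_).symm
    have h0 : Tendsto (fun n : ℕ => (1 : ℝ) / ((n : ℝ) + 1)) atTop (𝓝 0) :=
      tendsto_one_div_add_atTop_nhds_zero_nat
    have h1 : Tendsto (fun n : ℕ => wt α (1 / ((n : ℝ) + 1)) y) atTop (𝓝 (wt α 0 y)) := by
      refine ENNReal.tendsto_ofReal (Tendsto.div tendsto_const_nhds ?_ (by positivity))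
      exact Tendsto.rpow_const (tendsto_const_nhds.add h0) (Or.inr hα)
    have h2 : Tendsto (fun n : ℕ => wt α (1 / ((n : ℝ) + 1)) y ^ p) atTop (𝓝 (wt α 0 y ^ p)) :=
      (ENNReal.continuous_rpow_const.tendsto _).comp h1
    refine ENNReal.Tendsto.mul_const h2 (Or.inl ?_)
    have hw : 0 < wt α 0 y := ENNReal.ofReal_pos.2 (by positivity)
    exact (ENNReal.rpow_pos hw ENNReal.ofReal_ne_top).ne'
  rw [wNorm_eq hp _ hf, setLIntegral_congr_fun measurableSet_Ioi hlim]
  refine (lintegral_liminf_le hE).trans ?_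
  refine liminf_le_of_le (by isBoundedDefault) fun b hb => ?_
  obtain ⟨n, hn⟩ := hb.exists
  refine hn.trans ?_
  have := h (1 / ((n : ℝ) + 1)) (by positivity)
  rwa [wNorm_eq hp _ hf] at this

/-- For a small Lipschitz constant the flat model is controlled by the derivative of the Beurling
transform: the deviation is `δ` times an operator bounded in the weighted norm, and is absorbed in
the left-hand side, which is finite for the truncated weights. -/
lemma exists_absorb {α p : ℝ} (hα : 0 < α) (hα1 : α < 1) (hp : 1 < p) (hαp : 1 < α * p) :
    ∃ δ : ℝ, 0 < δ ∧ δ ≤ 1 / 8 ∧ ∀ A : ℝ → ℝ, LipschitzWith (Real.toNNReal δ) A →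
      HasCompactSupport A → ∀ F : ℝ → ℝ → ℝ≥0∞, Measurable (Function.uncurry F) →
      (∀ x y, 0 < y → ‖dB A ⟨x, A x + y⟩‖ₑ ≤ F x y) →
      wNorm p (wt α 0) (fun x y => ‖flat A ⟨x, y⟩‖ₑ) ≤ 2 * (2 ^ p * wNorm p (wt α 0) F) := by
  have hp0 : 0 < p := by linarith
  have hC1 := lintegral_k1_lt_top hp hαp hα1
  have hC2 := lintegral_k2_lt_top hp hαp hα1
  set C1 := ∫⁻ q in reg 1, ENNReal.ofReal ((1 + |q.1|) ^ 2)⁻¹ *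
      (ENNReal.ofReal (q.2⁻¹ + q.2 ^ (α - 1)) * ENNReal.ofReal (q.2 ^ (-(1 / p)))) with hC1d
  set C2 := ∫⁻ q in reg 0, ENNReal.ofReal (q.2 / (1 + |q.1|) ^ 3) *
      (ENNReal.ofReal (q.2⁻¹ + q.2 ^ (α - 1)) * ENNReal.ofReal (q.2 ^ (-(1 / p)))) with hC2d
  set M : ℝ≥0∞ := 2 ^ p * (2 ^ p * (C1 ^ p + C2 ^ p)) with hM
  have hMt : M ≠ ⊤ := by
    have h2 : (2 : ℝ≥0∞) ^ p ≠ ⊤ := ENNReal.rpow_ne_top_of_nonneg hp0.le ENNReal.ofNat_ne_top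
    exact ENNReal.mul_ne_top h2 (ENNReal.mul_ne_top h2 (ENNReal.add_ne_top.2
      ⟨ENNReal.rpow_ne_top_of_nonneg hp0.le hC1.ne, ENNReal.rpow_ne_top_of_nonneg hp0.le hC2.ne⟩))
  set m := M.toReal with hm
  have hm0 : 0 ≤ m := ENNReal.toReal_nonneg
  -- with this choice `(2048 δ) ^ p * M ≤ 2048 δ * M ≤ 1 / 2`
  refine ⟨1 / (4096 * (m + 1)), by positivity, ?_, ?_⟩
  · rw [div_le_div_iff₀ (by positivity) (by norm_num)]
    linarith
  intro A hL hs F hF hFB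
  set δ := 1 / (4096 * (m + 1)) with hδd
  have hδ : 0 < δ := by positivity
  have hδ8 : δ ≤ 1 / 8 := by
    rw [hδd, div_le_div_iff₀ (by positivity) (by norm_num)]
    linarith
  have hK : ENNReal.ofReal (2048 * δ) ^ p * M ≤ 2⁻¹ := by
    have h1 : ENNReal.ofReal (2048 * δ) ≤ 1 := by
      rw [ENNReal.ofReal_le_one, hδd, mul_one_div, div_le_one (by positivity)]
      linarith
    calc _ ≤ ENNReal.ofReal (2048 * δ) * M := by
          gcongr
          exact ENNReal.rpow_le_self_of_le_one h1 hp.le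
      _ = ENNReal.ofReal (2048 * δ * m) := by
          rw [ENNReal.ofReal_mul (p := 2048 * δ) (by positivity), hm, ENNReal.ofReal_toReal hMt]
      _ ≤ ENNReal.ofReal 2⁻¹ := by
          apply ENNReal.ofReal_le_ofReal
          rw [hδd, mul_one_div, div_mul_eq_mul_div, div_le_iff₀ (by positivity)]
          linarith
      _ = 2⁻¹ := by rw [ENNReal.ofReal_inv_of_pos two_pos]; norm_num
  have hfm := measurable_flat hL.continuous
  set f : ℝ → ℝ → ℝ≥0∞ := fun x y => ‖flat A ⟨x, y⟩‖ₑ with hfd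
  let O1 : ℝ → ℝ → ℝ≥0∞ := fun x y => ∫⁻ q in reg 1, ENNReal.ofReal ((1 + |q.1|) ^ 2)⁻¹ *
    f (x + y * 0) (y * q.2)
  let O2 : ℝ → ℝ → ℝ≥0∞ := fun x y => ∫⁻ q in reg 0, ENNReal.ofReal (q.2 / (1 + |q.1|) ^ 3) *
    f (x + y * (q.1 * (1 - q.2 / (1 + |q.1|)))) (y * q.2)
  have hO1m : Measurable (Function.uncurry O1) :=
    measurable_operator hfm (k := fun q : ℝ × ℝ => ENNReal.ofReal ((1 + |q.1|) ^ 2)⁻¹)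
      (θ := fun _ => 0) (s := fun q => q.2) (by fun_prop) (by fun_prop) (by fun_prop)
  have hpt : ∀ x y, 0 < y → f x y ≤ F x y + ENNReal.ofReal (2048 * δ) * (O1 x y + O2 x y) := by
    intro x y hy
    refine le_trans ?_ (add_le_add (hFB x y hy)
      (enorm_dB_sub_flat_le_operator hδ.le hδ8 hL hs x hy))
    rw [← enorm_neg (dB A ⟨x, A x + y⟩ - flat A ⟨x, y⟩)]
    refine le_trans (le_of_eq ?_) (enorm_add_le _ _)
    change ‖flat A ⟨x, y⟩‖ₑ = _
    congr 1
    ring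
  have hO1 : ∀ ε, 0 < ε → wNorm p (wt α ε) O1 ≤ C1 ^ p * wNorm p (wt α ε) f := by
    intro ε hε
    refine wNorm_operator hp (measurable_wt α ε) hfm
      (k := fun q : ℝ × ℝ => ENNReal.ofReal ((1 + |q.1|) ^ 2)⁻¹)
      (b := fun q => ENNReal.ofReal (q.2⁻¹ + q.2 ^ (α - 1)))
      (θ := fun _ => 0) (s := fun q => q.2) (by fun_prop) (by fun_prop) (by fun_prop)
      (by fun_prop) ?_ ?_ ?_ ?_
    all_goals
      refine (ae_restrict_iff' (measurableSet_reg 1)).2 (Eventually.of_forall fun q hq => ?_)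
      have hq0 : 0 < q.2 := lt_trans one_pos hq.1
    · exact hq0
    · exact ⟨(ENNReal.ofReal_pos.2 (by positivity)).ne', ENNReal.ofReal_ne_top⟩
    · exact ⟨(ENNReal.ofReal_pos.2 (by positivity)).ne', ENNReal.ofReal_ne_top⟩
    · exact fun y hy => wt_scale hα.le hε.le hy hq0
  have hO2 : ∀ ε, 0 < ε → wNorm p (wt α ε) O2 ≤ C2 ^ p * wNorm p (wt α ε) f := by
    intro ε hε
    refine wNorm_operator hp (measurable_wt α ε) hfm
      (k := fun q : ℝ × ℝ => ENNReal.ofReal (q.2 / (1 + |q.1|) ^ 3))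
      (b := fun q => ENNReal.ofReal (q.2⁻¹ + q.2 ^ (α - 1)))
      (θ := fun q => q.1 * (1 - q.2 / (1 + |q.1|))) (s := fun q => q.2) (by fun_prop)
      (by fun_prop) (by fun_prop) (by fun_prop) ?_ ?_ ?_ ?_
    all_goals
      refine (ae_restrict_iff' (measurableSet_reg 0)).2 (Eventually.of_forall fun q hq => ?_)
      have hq0 : 0 < q.2 := hq.1
    · exact hq0
    · exact ⟨(ENNReal.ofReal_pos.2 (by positivity)).ne', ENNReal.ofReal_ne_top⟩
    · exact ⟨(ENNReal.ofReal_pos.2 (by positivity)).ne', ENNReal.ofReal_ne_top⟩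
    · exact fun y hy => wt_scale hα.le hε.le hy hq0
  refine wNorm_zero_le hα.le hp0.le hfm fun ε hε => ?_
  have hN := wNorm_flat_lt_top hp hαp hε hδ hL hs
  change wNorm p (wt α ε) f < ⊤ at hN
  set N := wNorm p (wt α ε) f with hNd
  -- since `N` is finite, the term `N / 2` can be moved to the left-hand side
  have key : N ≤ 2 ^ p * wNorm p (wt α 0) F + N / 2 := by
    calc N ≤ wNorm p (wt α ε)
          (fun x y => F x y + ENNReal.ofReal (2048 * δ) * (O1 x y + O2 x y)) :=
          wNorm_mono hp0.le (fun _ _ => le_rfl) hpt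
      _ ≤ 2 ^ p * (wNorm p (wt α ε) F + ENNReal.ofReal (2048 * δ) ^ p *
            (2 ^ p * (C1 ^ p * N + C2 ^ p * N))) := by
          refine (wNorm_add_le hp (measurable_wt α ε) hF).trans ?_
          rw [wNorm_const_mul hp0.le _ _ ENNReal.ofReal_ne_top]
          gcongr
          refine (wNorm_add_le hp (measurable_wt α ε) hO1m).trans ?_
          gcongr
          · exact hO1 ε hε
          · exact hO2 ε hε
      _ = 2 ^ p * wNorm p (wt α ε) F + ENNReal.ofReal (2048 * δ) ^ p * M * N := by
          rw [hM]; ring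
      _ ≤ 2 ^ p * wNorm p (wt α 0) F + 2⁻¹ * N := by
          gcongr
          exact wNorm_mono hp0.le (fun y hy => wt_le_zero hα.le hε.le hy) fun _ _ _ => le_rfl
      _ = _ := by rw [ENNReal.div_eq_inv_mul]
  have h2 : N / 2 ≤ 2 ^ p * wNorm p (wt α 0) F := by
    have hh : N / 2 ≠ ⊤ := (ENNReal.div_lt_top hN.ne two_ne_zero).ne
    rw [← ENNReal.add_le_add_iff_right hh, ENNReal.add_halves]
    exact key
  calc N = 2 * (N / 2) := by rw [ENNReal.mul_div_cancel two_ne_zero ENNReal.ofNat_ne_top]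
    _ ≤ _ := by gcongr

end

/-! ### The Besov seminorm -/

section

variable {A : ℝ → ℝ} {δ : ℝ}

lemma lintegral_even {G : ℝ → ℝ≥0∞} (hG : ∀ h, G (-h) = G h) :
    ∫⁻ h, G h = 2 * ∫⁻ h in Ioi (0 : ℝ), G h := by
  have h1 : ∫⁻ h in Iic (0 : ℝ), G h = ∫⁻ h in Ioi (0 : ℝ), G h := by
    rw [setLIntegral_congr Iio_ae_eq_Iic.symm]
    have := (Measure.measurePreserving_neg (volume : Measure ℝ)).setLIntegral_comp_preimage_emb
      (MeasurableEquiv.neg ℝ).measurableEmbedding G (Iio 0)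
    rw [← this]
    simp [hG]
  rw [← lintegral_add_compl G measurableSet_Ioi, compl_Ioi, h1, two_mul]

/-- The double integral over the plane, with the increment `h = y - x` as a variable; by symmetry
positive increments suffice. The result is a weighted norm with `h` in the role of the height. -/
lemma besov_eq {α p : ℝ} (hp : 1 < p) (D : ℝ → ℝ) (hD : Measurable D) :
    ∫⁻ x : ℝ, ∫⁻ y : ℝ, ENNReal.ofReal (|D x - D y| ^ p / |x - y| ^ (α * p)) =
      2 * wNorm p (fun h => ENNReal.ofReal (h ^ (-α))) (fun x h => ‖D x - D (x + h)‖ₑ) := by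
  have hp0 : 0 ≤ p := by linarith
  have h1 : ∀ x : ℝ, ∫⁻ y : ℝ, ENNReal.ofReal (|D x - D y| ^ p / |x - y| ^ (α * p)) =
      ∫⁻ h : ℝ, ENNReal.ofReal (|D x - D (x + h)| ^ p / |h| ^ (α * p)) := by
    intro x
    rw [← lintegral_add_left_eq_self _ x]
    refine lintegral_congr fun h => ?_
    rw [sub_add_cancel_left, abs_neg]
  simp_rw [h1]
  rw [lintegral_lintegral_swap (by
    apply Measurable.aemeasurable
    unfold Function.uncurry
    fun_prop), lintegral_even, wNorm]
  · congr 1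
    refine setLIntegral_congr_fun measurableSet_Ioi fun h hh => lintegral_congr fun x => ?_
    have hh : 0 < h := hh
    rw [Real.enorm_eq_ofReal_abs, ← ENNReal.ofReal_mul (by positivity),
      ENNReal.ofReal_rpow_of_nonneg (by positivity) hp0]
    congr 1
    rw [Real.mul_rpow (by positivity) (by positivity), ← Real.rpow_mul hh.le, abs_of_pos hh,
      neg_mul, Real.rpow_neg hh.le]
    ring
  · intro h
    rw [← lintegral_add_right_eq_self _ h]
    refine lintegral_congr fun x => ?_
    rw [add_neg_cancel_right, abs_sub_comm, abs_neg]

/-- The exact homogeneity of the weight `y ^ (1 - α)`. The extra term `s⁻¹` in `wt_scale` would not be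
integrable against `s ^ (-1 / p)` near `s = 0`, which matters for the Besov seminorm. -/
lemma wt_zero_scale {α y s : ℝ} (hy : 0 < y) (hs : 0 < s) :
    wt α 0 y ≤ ENNReal.ofReal (s ^ (α - 1)) * wt α 0 (y * s) := by
  unfold wt
  rw [← ENNReal.ofReal_mul (by positivity)]
  apply ENNReal.ofReal_le_ofReal
  rw [add_zero, add_zero, Real.mul_rpow hy.le hs.le, Real.rpow_sub_one hs.ne']
  refine le_of_eq ?_
  field_simp

/-- The Besov seminorm of `A'` is controlled by the weighted norm of the flat model. -/
lemma exists_besov_le {α p : ℝ} (hp : 1 < p) (hαp : 1 < α * p) :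
    ∃ c : ℝ≥0∞, c ≠ ⊤ ∧ ∀ δ : ℝ, 0 ≤ δ → ∀ A : ℝ → ℝ, LipschitzWith (Real.toNNReal δ) A →
      HasCompactSupport A →
      ∫⁻ x : ℝ, ∫⁻ y : ℝ, ENNReal.ofReal (|deriv A x - deriv A y| ^ p / |x - y| ^ (α * p)) ≤
        c * wNorm p (wt α 0) (fun x y => ‖flat A ⟨x, y⟩‖ₑ) := by
  have hp0 : 0 < p := by linarith
  have hs' : 1 / p < α := by rw [div_lt_iff₀ hp0]; exact hαp
  set B : ℝ≥0∞ := ∫⁻ s in Ioo (0 : ℝ) (1 / 2),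
    2 * (ENNReal.ofReal (s ^ (α - 1)) * ENNReal.ofReal (s ^ (-(1 / p)))) with hB
  have hBt : B ≠ ⊤ := by
    have hi : IntegrableOn (fun s : ℝ => s ^ (α - 1 - 1 / p)) (Ioo 0 (1 / 2)) :=
      (intervalIntegral.integrableOn_Ioo_rpow_iff (by norm_num)).2 (by linarith)
    have h1 := hi.hasFiniteIntegral
    rw [hasFiniteIntegral_iff_ofReal ((ae_restrict_iff' measurableSet_Ioo).2
      (Eventually.of_forall fun s hs => by have := hs.1; positivity))] at h1
    rw [hB, lintegral_const_mul' _ _ ENNReal.ofNat_ne_top]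
    refine ENNReal.mul_ne_top ENNReal.ofNat_ne_top (ne_of_lt (lt_of_le_of_lt ?_ h1))
    refine setLIntegral_mono' measurableSet_Ioo fun s hs => le_of_eq ?_
    have := hs.1
    rw [← ENNReal.ofReal_mul (by positivity), ← Real.rpow_add hs.1]
    rfl
  refine ⟨2 * (2 ^ p * (B ^ p + B ^ p)), ?_, ?_⟩
  · have h2 : (2 : ℝ≥0∞) ^ p ≠ ⊤ := ENNReal.rpow_ne_top_of_nonneg hp0.le ENNReal.ofNat_ne_top
    have h3 := ENNReal.rpow_ne_top_of_nonneg hp0.le hBt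
    exact ENNReal.mul_ne_top ENNReal.ofNat_ne_top (ENNReal.mul_ne_top h2
      (ENNReal.add_ne_top.2 ⟨h3, h3⟩))
  intro δ hδ A hL hs
  rw [besov_eq hp _ (measurable_deriv A)]
  have hfm := measurable_flat hL.continuous
  set f : ℝ → ℝ → ℝ≥0∞ := fun x y => ‖flat A ⟨x, y⟩‖ₑ with hfd
  let O3 : ℝ → ℝ → ℝ≥0∞ := fun x y => ∫⁻ s in Ioo (0 : ℝ) (1 / 2), 2 * f (x + y * s) (y * s)
  let O4 : ℝ → ℝ → ℝ≥0∞ := fun x y =>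
    ∫⁻ s in Ioo (0 : ℝ) (1 / 2), 2 * f (x + y * (1 - s)) (y * s)
  have hO3m : Measurable (Function.uncurry O3) :=
    measurable_operator hfm (k := fun _ : ℝ => 2) (θ := fun s => s) (s := fun s => s)
      (by fun_prop) (by fun_prop) (by fun_prop)
  have hop : ∀ θ : ℝ → ℝ, Measurable θ →
      wNorm p (wt α 0) (fun x y => ∫⁻ s in Ioo (0 : ℝ) (1 / 2), 2 * f (x + y * θ s) (y * s)) ≤
        B ^ p * wNorm p (wt α 0) f := by
    intro θ hθ
    refine wNorm_operator hp (measurable_wt α 0) hfm (k := fun _ : ℝ => 2)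
      (b := fun s => ENNReal.ofReal (s ^ (α - 1))) (θ := θ) (s := fun s => s) (by fun_prop)
      (by fun_prop) hθ (by fun_prop) ?_ ?_ ?_ ?_
    all_goals
      refine (ae_restrict_iff' measurableSet_Ioo).2 (Eventually.of_forall fun s hs => ?_)
      have hs0 : 0 < s := hs.1
    · exact hs0
    · exact ⟨two_ne_zero, ENNReal.ofNat_ne_top⟩
    · exact ⟨(ENNReal.ofReal_pos.2 (by positivity)).ne', ENNReal.ofReal_ne_top⟩
    · exact fun y hy => wt_zero_scale hy hs0
  rw [mul_assoc 2]
  gcongr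
  calc _ ≤ wNorm p (wt α 0) (fun x y => O3 x y + O4 x y) := by
        refine setLIntegral_mono' measurableSet_Ioi fun h hh => lintegral_mono_ae ?_
        have hh : 0 < h := hh
        have hd := ae_differentiableAt hL
        have hd' : ∀ᵐ x : ℝ, DifferentiableAt ℝ A (x + h) :=
          (measurePreserving_add_right volume h).quasiMeasurePreserving.ae hd
        filter_upwards [hd, hd'] with x hx hx'
        have hb := enorm_deriv_sub_deriv_le hδ hL hs hh hx hx'
        have i1 := lintegral_Ioo_scale (fun η => 2 * ‖flat A ⟨x + η, η⟩‖ₑ) 0 (1 / 2) hh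
        have i2 := lintegral_Ioo_scale (fun η => 2 * ‖flat A ⟨x + h - η, η⟩‖ₑ) 0 (1 / 2) hh
        rw [mul_zero, mul_one_div] at i1 i2
        rw [i1, i2, ← mul_add] at hb
        refine ENNReal.rpow_le_rpow ?_ hp0.le
        refine (mul_le_mul_right hb _).trans (le_of_eq ?_)
        rw [← mul_assoc, ← ENNReal.ofReal_mul (by positivity)]
        congr 1
        · unfold wt
          rw [add_zero, Real.rpow_neg hh.le]
          congr 1
          ring
        · congr 1
          refine lintegral_congr fun s => ?_
          simp only [hfd]
          congr 4
          ring
    _ ≤ 2 ^ p * (wNorm p (wt α 0) O3 + wNorm p (wt α 0) O4) :=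
        wNorm_add_le hp (measurable_wt α 0) hO3m
    _ ≤ 2 ^ p * (B ^ p * wNorm p (wt α 0) f + B ^ p * wNorm p (wt α 0) f) := by
        gcongr
        · exact hop (fun s => s) measurable_id
        · exact hop (fun s => 1 - s) (by fun_prop)
    _ = _ := by ring

end

/-! ### Lower bound for the fractional Sobolev seminorm -/

section

variable {A : ℝ → ℝ} {δ : ℝ}

lemma norm_circleMap_sub (z : ℂ) {s : ℝ} (hs : 0 < s) (θ : ℝ) : ‖circleMap z s θ - z‖ = s := by
  rw [circleMap_sub_center, norm_circleMap_zero, abs_of_pos hs]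

lemma circleMap_mem_ball' (z : ℂ) {r s : ℝ} (hs : 0 < s) (hsr : s < r) (θ : ℝ) :
    circleMap z s θ ∈ Metric.ball z r := by
  rw [Metric.mem_ball, dist_eq_norm, norm_circleMap_sub z hs]
  exact hsr

/-- Cauchy's formula for the derivative bounds it by an `L¹` mean over the circle, hence by the `L²`
mean. -/
lemma circle_lower {g : ℂ → ℂ} {z : ℂ} {r s : ℝ} (hs : 0 < s) (hsr : s < r)
    (hg : ∀ w ∈ Metric.ball z r, DifferentiableAt ℂ g w) :
    2 * Real.pi * s ^ 2 * ‖deriv g z‖ ^ 2 ≤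
      ∫ θ in (-Real.pi)..Real.pi, ‖g z - g (circleMap z s θ)‖ ^ 2 := by
  have hπ := Real.pi_pos
  set u : ℝ → ℝ := fun θ => ‖g z - g (circleMap z s θ)‖ with hu
  have huc : Continuous u := by
    have : Continuous fun θ => g (circleMap z s θ) := continuous_iff_continuousAt.2 fun θ =>
      ContinuousAt.comp (hg _ (circleMap_mem_ball' z hs hsr θ)).continuousAt
        (continuous_circleMap z s).continuousAt
    exact (continuous_const.sub this).norm
  set M := ‖deriv g z‖ with hM
  have h1 : 2 * Real.pi * s * M ≤ ∫ θ in (0 : ℝ)..2 * Real.pi, u θ := by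
    have hc := Complex.two_pi_I_inv_smul_circleIntegral_sub_sq_inv_smul_of_differentiable
      (U := Metric.ball z r) Metric.isOpen_ball (c := z) (w₀ := z) (R := s)
      (f := fun w => g w - g z) (Metric.closedBall_subset_ball hsr)
      (fun w hw => ((hg w hw).sub_const _).differentiableWithinAt) (Metric.mem_ball_self hs)
    rw [deriv_sub_const] at hc
    have hn : ‖∮ w in C(z, s), ((w - z) ^ 2)⁻¹ • (g w - g z)‖ ≤
        s⁻¹ * ∫ θ in (0 : ℝ)..2 * Real.pi, u θ := by
      rw [circleIntegral, ← intervalIntegral.integral_const_mul]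
      refine (intervalIntegral.norm_integral_le_integral_norm (by positivity)).trans (le_of_eq ?_)
      refine intervalIntegral.integral_congr fun θ _ => ?_
      simp only [hu, norm_smul, deriv_circleMap, norm_mul, Complex.norm_I, norm_inv, norm_pow,
        norm_circleMap_sub z hs, norm_circleMap_zero, abs_of_pos hs,
        norm_sub_rev (g z)]
      field_simp
    have hM' : M = (2 * Real.pi)⁻¹ * ‖∮ w in C(z, s), ((w - z) ^ 2)⁻¹ • (g w - g z)‖ := by
      rw [hM, ← hc, norm_smul]
      congr 1
      simp [abs_of_pos hπ]
    rw [hM']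
    calc _ = s * ‖∮ w in C(z, s), ((w - z) ^ 2)⁻¹ • (g w - g z)‖ := by field_simp
      _ ≤ s * (s⁻¹ * ∫ θ in (0 : ℝ)..2 * Real.pi, u θ) := by gcongr
      _ = _ := by field_simp
  have h2 : ∫ θ in (-Real.pi)..Real.pi, u θ ^ 2 = ∫ θ in (0 : ℝ)..2 * Real.pi, u θ ^ 2 := by
    have hper : Function.Periodic (fun θ => u θ ^ 2) (2 * Real.pi) := fun θ => by
      simp only [hu, periodic_circleMap z s θ]
    have := hper.intervalIntegral_add_eq (-Real.pi) 0
    rw [show -Real.pi + 2 * Real.pi = Real.pi by ring, zero_add] at this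
    exact this
  change _ ≤ ∫ θ in (-Real.pi)..Real.pi, u θ ^ 2
  rw [h2]
  -- `u ^ 2` lies above its tangent line at `s * M`
  have h3 : ∫ θ in (0 : ℝ)..2 * Real.pi, (2 * (s * M) * u θ - (s * M) ^ 2) ≤
      ∫ θ in (0 : ℝ)..2 * Real.pi, u θ ^ 2 := by
    refine intervalIntegral.integral_mono_on (by positivity)
      (Continuous.intervalIntegrable (by fun_prop) _ _)
      (Continuous.intervalIntegrable (by fun_prop) _ _) fun θ _ => ?_
    nlinarith [sq_nonneg (u θ - s * M)]
  rw [intervalIntegral.integral_sub (Continuous.intervalIntegrable (by fun_prop) _ _)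
    (Continuous.intervalIntegrable (by fun_prop) _ _), intervalIntegral.integral_const_mul,
    intervalIntegral.integral_const] at h3
  have h4 : 2 * (s * M) * (2 * Real.pi * s * M) ≤
      2 * (s * M) * ∫ θ in (0 : ℝ)..2 * Real.pi, u θ := by gcongr
  simp only [sub_zero, smul_eq_mul] at h3
  nlinarith

/-- The `D^α` functional at `z` controls the derivative at `z`. -/
lemma disc_lower {α : ℝ} (hα1 : α < 1) {g : ℂ → ℂ} {z : ℂ} {r : ℝ} (hr : 0 < r)
    (hg : ∀ w ∈ Metric.ball z r, DifferentiableAt ℂ g w) :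
    ENNReal.ofReal (Real.pi / (1 - α) * r ^ (2 - 2 * α) * ‖deriv g z‖ ^ 2) ≤
      ∫⁻ w in Metric.ball z r,
        ENNReal.ofReal (‖g z - g w‖ ^ (2 : ℝ) / ‖z - w‖ ^ (2 + 2 * α)) := by
  have hπ := Real.pi_pos
  set Φ : ℂ → ℝ≥0∞ :=
    fun w => ENNReal.ofReal (‖g z - g w‖ ^ (2 : ℝ) / ‖z - w‖ ^ (2 + 2 * α)) with hΦ
  set H : ℝ × ℝ → ℝ := fun q =>
    q.1 * (‖g z - g (circleMap z q.1 q.2)‖ ^ 2 / q.1 ^ (2 + 2 * α)) with hH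
  set S : Set (ℝ × ℝ) := Ioo 0 r ×ˢ Ioo (-Real.pi) Real.pi with hS
  have hSm : MeasurableSet S := measurableSet_Ioo.prod measurableSet_Ioo
  have hgc : ContinuousOn (fun q : ℝ × ℝ => g (circleMap z q.1 q.2)) S := by
    intro q hq
    refine ContinuousAt.continuousWithinAt ?_
    refine ContinuousAt.comp (f := fun q : ℝ × ℝ => circleMap z q.1 q.2)
      (hg _ (circleMap_mem_ball' z hq.1.1 hq.1.2 q.2)).continuousAt ?_
    unfold circleMap
    fun_prop
  have hHm : AEMeasurable (fun q => ENNReal.ofReal (H q))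
      (((volume : Measure ℝ).prod (volume : Measure ℝ)).restrict S) := by
    refine ENNReal.measurable_ofReal.comp_aemeasurable (ContinuousOn.aemeasurable ?_ hSm)
    refine continuousOn_fst.mul (ContinuousOn.div ?_ ?_ ?_)
    · exact ((continuousOn_const.sub hgc).norm).pow 2
    · exact continuousOn_fst.rpow_const fun q hq => Or.inl hq.1.1.ne'
    · exact fun q hq => (Real.rpow_pos_of_pos hq.1.1 _).ne'
  have hpolar : ∫⁻ q in S, ENNReal.ofReal (H q) ≤ ∫⁻ w in Metric.ball z r, Φ w := by
    rw [← lintegral_indicator measurableSet_ball, ← lintegral_add_left_eq_self _ z,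
      ← Complex.lintegral_comp_polarCoord_symm, polarCoord_target]
    refine le_trans (le_of_eq ?_) (lintegral_mono_set (s := S) (prod_mono Ioo_subset_Ioi_self
      le_rfl))
    refine setLIntegral_congr_fun hSm fun q hq => ?_
    have hq0 : 0 < q.1 := hq.1.1
    have hz : z + Complex.polarCoord.symm q = circleMap z q.1 q.2 := by
      rw [Complex.polarCoord_symm_apply, circleMap, Complex.exp_mul_I]
      push_cast
      rfl
    have hn : ‖z - circleMap z q.1 q.2‖ = q.1 := by
      rw [norm_sub_rev, norm_circleMap_sub z hq0]
    rw [hz, indicator_of_mem (circleMap_mem_ball' z hq0 hq.1.2 q.2), smul_eq_mul, hΦ]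
    dsimp only
    rw [hn, ← ENNReal.ofReal_mul hq0.le, Real.rpow_two]
  refine le_trans ?_ hpolar
  rw [Measure.volume_eq_prod, setLIntegral_prod _ hHm]
  have hin : ∀ s ∈ Ioo 0 r,
      ENNReal.ofReal (2 * Real.pi * ‖deriv g z‖ ^ 2 * s ^ (1 - 2 * α)) ≤
        ∫⁻ θ in Ioo (-Real.pi) Real.pi, ENNReal.ofReal (H (s, θ)) := by
    intro s hs
    have hs0 : 0 < s := hs.1
    have huc : Continuous fun θ => g (circleMap z s θ) := continuous_iff_continuousAt.2 fun θ =>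
      ContinuousAt.comp (hg _ (circleMap_mem_ball' z hs.1 hs.2 θ)).continuousAt
        (continuous_circleMap z s).continuousAt
    have hHc : Continuous fun θ => H (s, θ) := by
      have h1 : Continuous fun θ => ‖g z - g (circleMap z s θ)‖ := (continuous_const.sub huc).norm
      exact ((h1.pow 2).div_const (s ^ (2 + 2 * α))).const_mul s
    rw [← ofReal_integral_eq_lintegral_ofReal
      ((hHc.integrableOn_Icc).mono_set Ioo_subset_Icc_self)
      (Eventually.of_forall fun θ => by simp only [hH]; positivity),
      ← integral_Ioc_eq_integral_Ioo, ← intervalIntegral.integral_of_le (by linarith)]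
    apply ENNReal.ofReal_le_ofReal
    simp only [hH]
    rw [intervalIntegral.integral_const_mul, intervalIntegral.integral_div]
    have hc := circle_lower hs.1 hs.2 hg
    calc _ = s * (2 * Real.pi * s ^ 2 * ‖deriv g z‖ ^ 2 / s ^ (2 + 2 * α)) := by
          rw [show (1 : ℝ) - 2 * α = 1 + 2 - (2 + 2 * α) by ring, Real.rpow_sub hs0,
            Real.rpow_add hs0, Real.rpow_one, Real.rpow_two]
          ring
      _ ≤ _ := by gcongr
  refine le_trans (le_of_eq ?_) (setLIntegral_mono' measurableSet_Ioo hin)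
  have hi : IntegrableOn (fun s : ℝ => s ^ (1 - 2 * α)) (Ioo 0 r) :=
    (intervalIntegral.integrableOn_Ioo_rpow_iff hr).2 (by linarith)
  rw [← ofReal_integral_eq_lintegral_ofReal (hi.const_mul _)
    ((ae_restrict_iff' measurableSet_Ioo).2 (Eventually.of_forall fun s hs => by
      have := hs.1
      positivity)), integral_const_mul, ← integral_Ioc_eq_integral_Ioo,
    ← intervalIntegral.integral_of_le hr.le, integral_rpow (Or.inl (by linarith)),
    Real.zero_rpow (by linarith), sub_zero, show 1 - 2 * α + 1 = 2 - 2 * α by ring]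
  congr 1
  have : 1 - α ≠ 0 := by linarith
  have h2 : 2 - 2 * α = 2 * (1 - α) := by ring
  rw [h2]
  field_simp

/-- Integration over the domain in coordinates adapted to its boundary. -/
lemma lintegral_domain (hA : Continuous A) {Ψ : ℂ → ℝ≥0∞} (hΨ : Measurable Ψ) :
    ∫⁻ w in {w : ℂ | A w.re < w.im}, Ψ w =
      ∫⁻ y in Ioi (0 : ℝ), ∫⁻ x : ℝ, Ψ ⟨x, A x + y⟩ := by
  have hΩ : MeasurableSet {w : ℂ | A w.re < w.im} :=
    measurableSet_lt (hA.measurable.comp Complex.measurable_re) Complex.measurable_im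
  set Ψ' := indicator {w : ℂ | A w.re < w.im} Ψ with hΨ'
  have hm : Measurable Ψ' := hΨ.indicator hΩ
  have e : Measurable fun q : ℝ × ℝ => (⟨q.1, q.2⟩ : ℂ) :=
    Complex.measurableEquivRealProd.symm.measurable
  have e' : Measurable fun q : ℝ × ℝ => (⟨q.1, A q.1 + q.2⟩ : ℂ) :=
    e.comp (measurable_fst.prodMk ((hA.measurable.comp measurable_fst).add measurable_snd))
  rw [← lintegral_indicator hΩ,
    ← (Complex.volume_preserving_equiv_real_prod.symm).lintegral_comp hm,
    Measure.volume_eq_prod]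
  change ∫⁻ q : ℝ × ℝ, Ψ' ⟨q.1, q.2⟩ ∂(volume.prod volume) = _
  rw [lintegral_prod (fun q : ℝ × ℝ => Ψ' ⟨q.1, q.2⟩) (hm.comp e).aemeasurable]
  have h1 : ∀ x : ℝ, ∫⁻ t, Ψ' ⟨x, t⟩ = ∫⁻ y, Ψ' ⟨x, A x + y⟩ := fun x =>
    (lintegral_add_left_eq_self (fun t => Ψ' ⟨x, t⟩) (A x)).symm
  simp_rw [h1]
  rw [lintegral_lintegral_swap (f := fun x y => Ψ' ⟨x, A x + y⟩) (hm.comp e').aemeasurable,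
    ← lintegral_indicator measurableSet_Ioi]
  refine lintegral_congr fun y => ?_
  by_cases hy : 0 < y
  · rw [indicator_of_mem (mem_Ioi.2 hy)]
    refine lintegral_congr fun x => indicator_of_mem ?_ _
    simpa using hy
  · rw [indicator_of_notMem (by simpa using hy)]
    refine (lintegral_congr fun x => indicator_of_notMem ?_ _).trans lintegral_zero
    simpa using hy

/-- The lower bound for the fractional Sobolev seminorm in terms of the derivative. -/
lemma exists_lower {α p : ℝ} (hα1 : α < 1) (hp : 1 < p) :
    ∃ K : ℝ≥0∞, K ≠ 0 ∧ K ≠ ⊤ ∧ ∀ δ : ℝ, 0 ≤ δ → δ ≤ 1 / 8 → ∀ A : ℝ → ℝ,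
      LipschitzWith (Real.toNNReal δ) A → ∀ g : ℂ → ℂ,
      (∀ w ∈ {w : ℂ | A w.re < w.im}, DifferentiableAt ℂ g w) →
      K * wNorm p (wt α 0) (fun x y => ‖deriv g ⟨x, A x + y⟩‖ₑ) ≤
        ∫⁻ z in {w : ℂ | A w.re < w.im},
          ((∫⁻ w in {w : ℂ | A w.re < w.im},
            ENNReal.ofReal (‖g z - g w‖ ^ (2 : ℝ) / ‖z - w‖ ^ (2 + 2 * α))) ^ ((1 : ℝ) / 2)) ^ p := by
  have hp0 : 0 < p := by linarith
  have hπ := Real.pi_pos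
  have hα' : 0 < 1 - α := by linarith
  set k : ℝ := Real.pi / (1 - α) * (1 / 2) ^ (2 - 2 * α) with hk
  have hk0 : 0 < k := by positivity
  set K := (ENNReal.ofReal k ^ ((1 : ℝ) / 2)) ^ p with hK
  have hKt : K ≠ ⊤ := ENNReal.rpow_ne_top_of_nonneg hp0.le
    (ENNReal.rpow_ne_top_of_nonneg (by norm_num) ENNReal.ofReal_ne_top)
  have hK0 : K ≠ 0 := (ENNReal.rpow_pos (ENNReal.rpow_pos (ENNReal.ofReal_pos.2 hk0)
    ENNReal.ofReal_ne_top) (ENNReal.rpow_ne_top_of_nonneg (by norm_num)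
      ENNReal.ofReal_ne_top)).ne'
  refine ⟨K, hK0, hKt, ?_⟩
  intro δ hδ hδ8 A hL g hg
  have hA := hL.continuous
  have hΩ : MeasurableSet {w : ℂ | A w.re < w.im} :=
    measurableSet_lt (hA.measurable.comp Complex.measurable_re) Complex.measurable_im
  set Ψ : ℂ → ℝ≥0∞ := fun w => (wt α 0 (w.im - A w.re) * ‖deriv g w‖ₑ) ^ p with hΨ
  have hΨm : Measurable Ψ := by
    have h1 : Measurable fun w : ℂ => wt α 0 (w.im - A w.re) :=
      (measurable_wt α 0).comp
        (Complex.measurable_im.sub (hA.measurable.comp Complex.measurable_re))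
    have h2 : Measurable fun w : ℂ => ‖deriv g w‖ₑ := (measurable_deriv g).enorm
    exact (h1.mul h2).pow_const p
  have hw : wNorm p (wt α 0) (fun x y => ‖deriv g ⟨x, A x + y⟩‖ₑ) =
      ∫⁻ w in {w : ℂ | A w.re < w.im}, Ψ w := by
    rw [lintegral_domain hA hΨm, wNorm]
    simp only [hΨ, add_sub_cancel_left]
  rw [hw, ← lintegral_const_mul' _ _ hKt]
  refine setLIntegral_mono' hΩ fun z hz => ?_
  have hz : A z.re < z.im := hz
  set y := z.im - A z.re with hy
  have hy0 : 0 < y := by linarith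
  -- the disc of radius `y / 2` lies in the domain because the Lipschitz constant is small
  have hball : Metric.ball z (y / 2) ⊆ {w : ℂ | A w.re < w.im} := by
    intro w hw
    rw [Metric.mem_ball, dist_eq_norm] at hw
    have h1 := (Complex.abs_re_le_norm (w - z)).trans_lt hw
    have h2 := (Complex.abs_im_le_norm (w - z)).trans_lt hw
    rw [Complex.sub_re] at h1
    rw [Complex.sub_im] at h2
    have h3 := abs_sub_le_of_lip hδ hL w.re z.re
    have h4 : δ * |w.re - z.re| ≤ 1 / 8 * (y / 2) := by gcongr
    have h5 := (abs_le.1 (h3.trans h4)).2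
    have h6 := (abs_lt.1 h2).1
    change A w.re < w.im
    linarith
  have hd := disc_lower (α := α) hα1 (half_pos hy0) (g := g) (z := z) fun w hw => hg w (hball hw)
  have hd' := hd.trans (lintegral_mono_set hball)
  have he : ENNReal.ofReal (Real.pi / (1 - α) * (y / 2) ^ (2 - 2 * α) * ‖deriv g z‖ ^ 2) =
      ENNReal.ofReal k * (wt α 0 y * ‖deriv g z‖ₑ) ^ (2 : ℝ) := by
    rw [wt, ← ofReal_norm, ← ENNReal.ofReal_mul (by positivity),
      ENNReal.ofReal_rpow_of_nonneg (by positivity) (by norm_num),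
      ← ENNReal.ofReal_mul (by positivity)]
    congr 1
    have h1 : (y / 2) ^ (2 - 2 * α) = (1 / 2) ^ (2 - 2 * α) * (y / y ^ α) ^ 2 := by
      rw [show y / 2 = 1 / 2 * y by ring, Real.mul_rpow (by norm_num) hy0.le]
      congr 1
      rw [Real.rpow_sub hy0, Real.rpow_two, mul_comm 2 α, Real.rpow_mul hy0.le, Real.rpow_two,
        div_pow]
    rw [h1, hk, add_zero, Real.rpow_two]
    ring
  rw [he] at hd'
  refine le_trans (le_of_eq ?_)
    (ENNReal.rpow_le_rpow (ENNReal.rpow_le_rpow hd' (by norm_num : (0 : ℝ) ≤ 1 / 2)) hp0.le)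
  rw [ENNReal.mul_rpow_of_nonneg _ _ (by norm_num : (0 : ℝ) ≤ 1 / 2), ← ENNReal.rpow_mul _ 2,
    ENNReal.mul_rpow_of_nonneg _ _ hp0.le]
  norm_num [hΨ, hK, ← hy]

end

end BeurlingBesov

theorem statement1 (α p : ℝ) (hα : 0 < α) (hα1 : α < 1) (hp1 : 1 < p) (hαp : 1 < α * p) :
    ∃ δ : ℝ, 0 < δ ∧ ∃ C : ℝ, 0 < C ∧
      ∀ A : ℝ → ℝ, LipschitzWith (Real.toNNReal δ) A → HasCompactSupport A →
        ∀ g : ℂ → ℂ,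
          (∀ w ∈ {w : ℂ | A w.re < w.im},
              HasDerivAt g
                ((Real.pi : ℂ)⁻¹ *
                  ∫ x : ℝ, Complex.ofReal (deriv A x) /
                    (Complex.ofReal x + Complex.ofReal (A x) * Complex.I - w) ^ 2) w) →
          (∫⁻ x : ℝ, ∫⁻ y : ℝ,
              ENNReal.ofReal (|deriv A x - deriv A y| ^ p / |x - y| ^ (α * p))) ≤
            ENNReal.ofReal C *
              ∫⁻ z in {w : ℂ | A w.re < w.im},
                ((∫⁻ w in {w : ℂ | A w.re < w.im},
                    ENNReal.ofReal (‖g z - g w‖ ^ (2 : ℝ) / ‖z - w‖ ^ (2 + 2 * α))) ^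
                  ((1 : ℝ) / 2)) ^ p := by
  have hp0 : 0 < p := by linarith
  obtain ⟨δ, hδ, hδ8, habs⟩ := BeurlingBesov.exists_absorb hα hα1 hp1 hαp
  obtain ⟨c, hc, hbes⟩ := BeurlingBesov.exists_besov_le (α := α) hp1 hαp
  obtain ⟨K, hK0, hKt, hlow⟩ := BeurlingBesov.exists_lower (α := α) hα1 hp1
  set E : ENNReal := c * (2 * (2 ^ p * K⁻¹)) with hE
  have hEt : E ≠ ⊤ := ENNReal.mul_ne_top hc (ENNReal.mul_ne_top ENNReal.ofNat_ne_top
    (ENNReal.mul_ne_top (ENNReal.rpow_ne_top_of_nonneg hp0.le ENNReal.ofNat_ne_top)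
      (ENNReal.inv_ne_top.2 hK0)))
  refine ⟨δ, hδ, E.toReal + 1, by positivity, ?_⟩
  intro A hL hs g hg
  have hl := hlow δ hδ.le hδ8 A hL g fun w hw => (hg w hw).differentiableAt
  have hFm : Measurable (Function.uncurry fun x y : ℝ => ‖deriv g ⟨x, A x + y⟩‖ₑ) := by
    have e : Measurable fun q : ℝ × ℝ => (⟨q.1, q.2⟩ : ℂ) :=
      Complex.measurableEquivRealProd.symm.measurable
    have e' : Measurable fun q : ℝ × ℝ => (⟨q.1, A q.1 + q.2⟩ : ℂ) :=
      e.comp (measurable_fst.prodMk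
        ((hL.continuous.measurable.comp measurable_fst).add measurable_snd))
    exact ((measurable_deriv g).comp e').enorm
  have ha := habs A hL hs _ hFm fun x y hy => by
    have hmem : (⟨x, A x + y⟩ : ℂ) ∈ {w : ℂ | A w.re < w.im} := by simpa using hy
    rw [(hg _ hmem).deriv]
    exact le_rfl
  refine (hbes δ hδ.le A hL hs).trans ?_
  have hl' := hl
  rw [ENNReal.mul_le_iff_le_inv hK0 hKt] at hl'
  refine (mul_le_mul_right (ha.trans (mul_le_mul_right (mul_le_mul_right hl' _) _)) _).trans ?_
  rw [← mul_assoc (2 ^ p), ← mul_assoc 2, ← mul_assoc c, ← hE]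
  refine mul_le_mul_left ?_ _
  rw [ENNReal.le_ofReal_iff_toReal_le hEt (by positivity)]
  linarith
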